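/- The topological entropy is continuous at every ergodic toral automorphism in the C^1 topology. Precisely: let A ∈ GL(d,ℤ) be ergodic. For every ε > 0 there exists η > 0 such that for every C^1, ℤ^d-periodic map g : ℝ^d → ℝ^d with ‖g‖_{C^1} < η for which F(v) := A v + g(v) is a C^1 diffeomorphism of ℝ^d, the induced homeomorphism f : 𝕋^d → 𝕋^d (with f ∘ π = π ∘ F) satisfies |h_top(f) − h_top(T_A)| ≤ ε. -/

import Mathlib

open Filter

namespace Paper

/-- The real matrix associated to an integer matrix. -/
noncomputable def matR {d : ℕ} (A : Matrix (Fin d) (Fin d) ℤ) : Matrix (Fin d) (Fin d) ℝ :=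
  A.map (fun n => (n : ℝ))

/-- The complex matrix associated to an integer matrix. -/
noncomputable def matC {d : ℕ} (A : Matrix (Fin d) (Fin d) ℤ) : Matrix (Fin d) (Fin d) ℂ :=
  A.map (fun n => (n : ℂ))

/-- `A` is ergodic: no complex eigenvalue of `A` is a root of unity. -/
def IsErgodicMatrix {d : ℕ} (A : Matrix (Fin d) (Fin d) ℤ) : Prop :=
  ∀ z : ℂ, (matC A).charpoly.IsRoot z → ∀ k : ℕ, 0 < k → z ^ k ≠ 1

/-- A lattice vector, i.e. an integer vector viewed in `ℝ^d`. -/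
def latVec {d : ℕ} (m : Fin d → ℤ) : Fin d → ℝ := fun i => (m i : ℝ)

/-- The quotient (pseudo)metric on the torus `𝕋^d = ℝ^d/ℤ^d`, computed on
representatives: `d(π u, π w) = inf_{m ∈ ℤ^d} ‖u - w - m‖` for a fixed norm on `ℝ^d`. -/
noncomputable def distQ {d : ℕ} (u w : Fin d → ℝ) : ℝ :=
  ⨅ m : Fin d → ℤ, ‖u - w - latVec m‖



/-- The dynamical distance `d_n(x,y) = max_{0 ≤ j < n} ρ(f^j x, f^j y)`. -/
noncomputable def dynDist {X : Type*} (ρ : X → X → ℝ) (f : X → X) (n : ℕ) (x y : X) : ℝ :=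
  ⨆ j : Fin n, ρ (f^[(j : ℕ)] x) (f^[(j : ℕ)] y)

/-- `S` is `(n,ε)`-separated for `f` with respect to the (pseudo)metric `ρ`. -/
def IsSeparated {X : Type*} (ρ : X → X → ℝ) (f : X → X) (n : ℕ) (ε : ℝ) (S : Finset X) : Prop :=
  ∀ x ∈ S, ∀ y ∈ S, x ≠ y → ε < dynDist ρ f n x y

/-- `N(f,n,ε)`: the maximal cardinality of an `(n,ε)`-separated set. -/
noncomputable def sepNum {X : Type*} (ρ : X → X → ℝ) (f : X → X) (n : ℕ) (ε : ℝ) : ℕ :=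
  sSup {k | ∃ S : Finset X, IsSeparated ρ f n ε S ∧ S.card = k}

/-- The topological entropy
`h_top(f) = lim_{ε→0⁺} limsup_{n→∞} (1/n) log N(f,n,ε)`; since `N(f,n,ε)` is
antitone in `ε`, the limit as `ε → 0⁺` equals the supremum over `ε > 0`. -/
noncomputable def topEnt {X : Type*} (ρ : X → X → ℝ) (f : X → X) : ℝ :=
  ⨆ ε : {e : ℝ // 0 < e},
    Filter.limsup (fun n : ℕ => Real.log (sepNum ρ f n ε) / n) Filter.atTop

/-!
Let `h` be the logarithm of the modulus of the determinant of `A` on its unstable subspace `U`. Both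
entropies lie in `[h, h + ε]`. Pass to a power `A ^ N` which expands `U` much more than the
center-stable subspace `V`; its norm on `V` grows subexponentially in `N`. Up to a linear change of
coordinates, the `N`-th iterate of a small perturbation differs from `A ^ N` by a bounded
`1`-Lipschitz map of `U × V`.

* Upper bound: at every scale `r`, the image of an `r`-ball under that iterate is covered by at most
  `exp (N * (h + ε))` balls of radius `r`, which bounds the separated sets.
* Lower bound: the images of a disc in `U` under the powers of that iterate contain `1`-Lipschitz
  graphs over `U`, and the projection to `U` of the `k`-th image has volume at least a constant
  times `exp (N * k * h)`. The points close to a given one in the dynamical metric only account for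
  a bounded part of this volume, up to boundedly many lattice translations.
-/

open Asymptotics Topology

section Growth

variable {𝕜 E : Type*} [NormedField 𝕜] [NormedAddCommGroup E] [NormedSpace 𝕜 E]

lemma isBigO_pow_of_norm_succ_le {F : Type*} [Norm F] {a : ℕ → E} {c : ℕ → F} {ρ t : ℝ}
    (hρ : 0 ≤ ρ) (hρt : ρ < t) (hc : c =O[atTop] fun n => t ^ n)
    (h : ∀ n, ‖a (n + 1)‖ ≤ ρ * ‖a n‖ + ‖c n‖) : a =O[atTop] fun n => t ^ n := by
  have ht : 0 < t := hρ.trans_lt hρt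
  obtain ⟨K, -, hK⟩ := bound_of_isBigO_nat_atTop hc
  have hK : ∀ n, ‖c n‖ ≤ K * t ^ n := fun n => by
    simpa only [norm_pow, Real.norm_of_nonneg ht.le] using hK (pow_pos ht n).ne'
  set C := max ‖a 0‖ (K / (t - ρ))
  have hKC : K ≤ C * (t - ρ) := (div_le_iff₀ (sub_pos.2 hρt)).1 (le_max_right _ _)
  refine IsBigO.of_bound C (Eventually.of_forall fun n => ?_)
  rw [norm_pow, Real.norm_of_nonneg ht.le]
  induction n with
  | zero => simp [C]
  | succ n ih =>
    calc ‖a (n + 1)‖ ≤ ρ * ‖a n‖ + K * t ^ n := (h n).trans (by gcongr; exact hK n)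
      _ ≤ ρ * (C * t ^ n) + C * (t - ρ) * t ^ n := by gcongr
      _ = C * t ^ (n + 1) := by ring

/-- The vectors `x` whose forward orbit under `T` satisfies `T ^ n x = O(t ^ n)`. -/
def growthSubmodule (T : Module.End 𝕜 E) (t : ℝ) : Submodule 𝕜 E where
  carrier := {x | (fun n => (T ^ n) x) =O[atTop] fun n => t ^ n}
  zero_mem' := by simpa using isBigO_zero _ _
  add_mem' hx hy := by simpa using hx.add hy
  smul_mem' c x hx := (hx.const_smul_left c).congr_left fun n => (map_smul (T ^ n) c x).symm

/-- The center-stable subspace of `T`: the vectors whose forward orbit grows subexponentially. -/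
def centerStableSubmodule (T : Module.End 𝕜 E) : Submodule 𝕜 E :=
  ⨅ t ∈ Set.Ioi (1 : ℝ), growthSubmodule T t

/-- The vectors `x` that have a backward orbit `y n` under `T` with `y n = O(s ^ n)`. For `s < 1`
this is an unstable subspace of `T`; asking for a backward orbit instead of using `T⁻¹` allows `T`
to be singular. -/
def unstableSubmodule (T : Module.End 𝕜 E) (s : ℝ) : Submodule 𝕜 E where
  carrier := {x | ∃ y : ℕ → E, y 0 = x ∧ (∀ n, T (y (n + 1)) = y n) ∧ y =O[atTop] fun n => s ^ n}
  zero_mem' := ⟨0, rfl, fun _ => map_zero T, isBigO_zero _ _⟩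
  add_mem' := by
    rintro _ _ ⟨y, rfl, hy, hyO⟩ ⟨z, rfl, hz, hzO⟩
    exact ⟨y + z, rfl, fun n => by simp [hy, hz], hyO.add hzO⟩
  smul_mem' := by
    rintro c _ ⟨y, rfl, hy, hyO⟩
    exact ⟨c • y, rfl, fun n => by simp [hy], hyO.const_smul_left c⟩

variable {T : Module.End 𝕜 E} {s t : ℝ} {x : E}

lemma mem_growthSubmodule :
    x ∈ growthSubmodule T t ↔ (fun n => (T ^ n) x) =O[atTop] fun n => t ^ n := Iff.rfl

lemma mem_centerStableSubmodule :
    x ∈ centerStableSubmodule T ↔ ∀ t : ℝ, 1 < t → x ∈ growthSubmodule T t := by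
  simp only [centerStableSubmodule, Submodule.mem_iInf, Set.mem_Ioi]

lemma isBigO_pow_succ_iff {a : ℕ → E} (ht : t ≠ 0) :
    ((fun n => a (n + 1)) =O[atTop] fun n => t ^ n) ↔ a =O[atTop] fun n => t ^ n := by
  have hshift : a =O[atTop] (fun n => t ^ n) ↔
      (fun n => a (n + 1)) =O[atTop] fun n => t ^ (n + 1) := by
    conv_lhs => rw [← map_add_atTop_eq_nat 1]
    exact isBigO_map
  rw [hshift]
  simp only [pow_succ']
  exact (isBigO_const_mul_right_iff ht).symm

lemma apply_mem_growthSubmodule_iff (ht : t ≠ 0) :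
    T x ∈ growthSubmodule T t ↔ x ∈ growthSubmodule T t := by
  simp only [mem_growthSubmodule, ← isBigO_pow_succ_iff (a := fun n => (T ^ n) x) ht, pow_succ,
    Module.End.mul_apply]

lemma apply_mem_centerStableSubmodule_iff :
    T x ∈ centerStableSubmodule T ↔ x ∈ centerStableSubmodule T := by
  simp only [mem_centerStableSubmodule]
  exact forall₂_congr fun t ht => apply_mem_growthSubmodule_iff (zero_lt_one.trans ht).ne'

lemma apply_mem_unstableSubmodule (hs : s ≠ 0) (hx : x ∈ unstableSubmodule T s) :
    T x ∈ unstableSubmodule T s := by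
  obtain ⟨y, rfl, hy, hyO⟩ := hx
  refine ⟨fun n => n.casesOn (T (y 0)) y, rfl, fun n => ?_, (isBigO_pow_succ_iff hs).1 hyO⟩
  cases n with
  | zero => rfl
  | succ n => exact hy n

lemma backwardOrbit_mem_unstableSubmodule (hs : s ≠ 0) {y : ℕ → E}
    (hy : ∀ n, T (y (n + 1)) = y n) (hyO : y =O[atTop] fun n => s ^ n) (n : ℕ) :
    y n ∈ unstableSubmodule T s := by
  induction n generalizing y with
  | zero => exact ⟨y, rfl, hy, hyO⟩
  | succ _ ih => exact ih (fun k => hy (k + 1)) ((isBigO_pow_succ_iff hs).2 hyO)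

lemma pow_apply_backwardOrbit {y : ℕ → E} (hy : ∀ n, T (y (n + 1)) = y n) (n : ℕ) :
    (T ^ n) (y n) = y 0 := by
  induction n with
  | zero => rfl
  | succ n ih => rw [pow_succ, Module.End.mul_apply, hy, ih]

lemma maxGenEigenspace_le_growthSubmodule {μ : 𝕜} (h : ‖μ‖ < t) :
    T.maxGenEigenspace μ ≤ growthSubmodule T t := by
  intro x hx
  obtain ⟨k, hk⟩ := (Module.End.mem_maxGenEigenspace _ _ _).1 hx
  clear hx
  induction k generalizing x with
  | zero => rw [show x = 0 by simpa using hk]; exact zero_mem _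
  | succ k ih =>
    have hT : T x = μ • x + (T - μ • 1) x := by simp
    refine isBigO_pow_of_norm_succ_le (norm_nonneg μ) h (ih (x := (T - μ • 1) x) ?_) fun n => ?_
    · rwa [← Module.End.mul_apply, ← pow_succ]
    · rw [pow_succ, Module.End.mul_apply, hT, map_add, map_smul, ← norm_smul]
      exact norm_add_le _ _

/-- A backward orbit of `x` is built from a backward orbit `w` of `(T - μ) x`: the recursion
`z (n + 1) = μ⁻¹ (z n - w (n + 1))` preserves `(T - μ) (z n) = w n`, and hence
`T (z (n + 1)) = z n`. -/
lemma maxGenEigenspace_le_unstableSubmodule {μ : 𝕜} (hμ : μ ≠ 0) (h : ‖μ‖⁻¹ < s) :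
    T.maxGenEigenspace μ ≤ unstableSubmodule T s := by
  have hs : s ≠ 0 := ((inv_nonneg.2 (norm_nonneg μ)).trans_lt h).ne'
  intro x hx
  obtain ⟨k, hk⟩ := (Module.End.mem_maxGenEigenspace _ _ _).1 hx
  clear hx
  induction k generalizing x with
  | zero => rw [show x = 0 by simpa using hk]; exact zero_mem _
  | succ k ih =>
    obtain ⟨w, hw0, hw, hwO⟩ := ih (x := (T - μ • 1) x) (by
      rwa [← Module.End.mul_apply, ← pow_succ])
    let z : ℕ → E := fun n => Nat.rec x (fun n zn => μ⁻¹ • (zn - w (n + 1))) n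
    have hz : ∀ n, μ • z (n + 1) = z n - w (n + 1) := fun n => smul_inv_smul₀ hμ _
    have hTz : ∀ n, T (z n) = μ • z n + w n := by
      intro n
      induction n with
      | zero => rw [hw0]; simp [z]
      | succ n ihn =>
        refine smul_right_injective E hμ ?_
        simp only [smul_add]
        rw [← map_smul, hz, map_sub, ihn, hw, smul_sub]
        abel
    refine ⟨z, rfl, fun n => (hTz (n + 1)).trans (by rw [hz, sub_add_cancel]), ?_⟩
    refine isBigO_pow_of_norm_succ_le (inv_nonneg.2 (norm_nonneg μ)) h
      (((isBigO_pow_succ_iff hs).2 hwO).const_smul_left μ⁻¹) fun n => ?_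
    rw [← norm_inv, ← norm_smul]
    exact (congrArg norm (smul_sub _ _ _)).trans_le (norm_sub_le _ _)

section Semiconj

variable {𝕜' X : Type*} [NormedField 𝕜'] [NormedAddCommGroup X] [NormedSpace 𝕜' X]
  {M : Module.End 𝕜' X} {p : X → E} {z : X}

lemma map_mem_growthSubmodule (hp : p =O[⊤] (id : X → X)) (hpM : Function.Semiconj p M T)
    (hz : z ∈ growthSubmodule M t) : p z ∈ growthSubmodule T t := by
  have hpz : ∀ n : ℕ, p ((M ^ n) z) = (T ^ n) (p z) := fun n => by
    simpa only [Module.End.coe_pow] using hpM.iterate_right n z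
  simp only [mem_growthSubmodule, ← hpz]
  exact (hp.comp_tendsto tendsto_top).trans hz

lemma map_mem_centerStableSubmodule (hp : p =O[⊤] (id : X → X)) (hpM : Function.Semiconj p M T)
    (hz : z ∈ centerStableSubmodule M) : p z ∈ centerStableSubmodule T :=
  mem_centerStableSubmodule.2 fun t ht =>
    map_mem_growthSubmodule hp hpM (mem_centerStableSubmodule.1 hz t ht)

lemma map_mem_unstableSubmodule (hp : p =O[⊤] (id : X → X)) (hpM : Function.Semiconj p M T)
    (hz : z ∈ unstableSubmodule M s) : p z ∈ unstableSubmodule T s := by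
  obtain ⟨y, rfl, hy, hyO⟩ := hz
  exact ⟨p ∘ y, rfl, fun n => by simp [← hpM.eq, hy], (hp.comp_tendsto tendsto_top).trans hyO⟩

end Semiconj

end Growth

section Splitting

lemma exists_lt_one_forall_inv_norm_lt {S : Set ℂ} (hS : S.Finite) :
    ∃ s : ℝ, 0 < s ∧ s < 1 ∧ ∀ μ ∈ S, 1 < ‖μ‖ → ‖μ‖⁻¹ < s := by
  have hlt : ∀ᶠ s in 𝓝[<] (1 : ℝ), ∀ μ ∈ S, 1 < ‖μ‖ → ‖μ‖⁻¹ < s := by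
    rw [eventually_all_finite hS]
    intro μ _
    by_cases hμ : 1 < ‖μ‖
    · filter_upwards [nhdsWithin_le_nhds (lt_mem_nhds (inv_lt_one_of_one_lt₀ hμ))] with s hs _
        using hs
    · exact Eventually.of_forall fun s h => absurd h hμ
  obtain ⟨s, hs, h0, h1⟩ := (hlt.and ((show ∀ᶠ s : ℝ in 𝓝[<] 1, 0 < s from
    nhdsWithin_le_nhds (lt_mem_nhds one_pos)).and self_mem_nhdsWithin)).exists
  exact ⟨s, h0, h1, hs⟩

lemma exists_codisjoint_unstable_centerStable_complex {X : Type*} [NormedAddCommGroup X]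
    [NormedSpace ℂ X] [FiniteDimensional ℂ X] (M : Module.End ℂ X) :
    ∃ s : ℝ, 0 < s ∧ s < 1 ∧ Codisjoint (unstableSubmodule M s) (centerStableSubmodule M) := by
  obtain ⟨s, hs0, hs1, hs⟩ := exists_lt_one_forall_inv_norm_lt M.finite_hasEigenvalue
  refine ⟨s, hs0, hs1, codisjoint_iff.2 (top_le_iff.1 ?_)⟩
  rw [← M.iSup_maxGenEigenspace_eq_top]
  refine iSup_le fun μ => ?_
  rcases le_or_gt ‖μ‖ 1 with hμ | hμ
  · exact le_sup_of_le_right fun x hx => mem_centerStableSubmodule.2 fun t ht =>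
      maxGenEigenspace_le_growthSubmodule (hμ.trans_lt ht) hx
  · by_cases hev : M.HasEigenvalue μ
    · exact le_sup_of_le_left (maxGenEigenspace_le_unstableSubmodule
        (norm_pos_iff.1 (zero_lt_one.trans hμ)) (hs μ hev hμ))
    · have hbot : M.maxGenEigenspace μ = ⊥ := by
        by_contra h
        exact hev (Module.End.HasUnifEigenvalue.lt (k := ⊤) zero_lt_one h)
      exact hbot.trans_le bot_le

variable {E : Type*} [NormedAddCommGroup E] [NormedSpace ℝ E]

lemma exists_complex_semiconj [FiniteDimensional ℝ E] (T : Module.End ℝ E) :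
    ∃ (n : ℕ) (M : Module.End ℂ (Fin n → ℂ)) (p : (Fin n → ℂ) →L[ℝ] E),
      Function.Surjective p ∧ Function.Semiconj p M T := by
  let b := Module.finBasis ℝ E
  let re : (Fin (Module.finrank ℝ E) → ℂ) →L[ℝ] (Fin (Module.finrank ℝ E) → ℝ) :=
    .pi fun i => Complex.reCLM.comp (.proj i)
  refine ⟨_, Matrix.toLin' ((LinearMap.toMatrix b b T).map Complex.ofReal),
    (b.equivFun.symm.toContinuousLinearEquiv : _ →L[ℝ] E).comp re, fun x => ?_, fun z => ?_⟩
  · refine ⟨fun i => b.equivFun x i, ?_⟩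
    refine Eq.trans (congrArg b.equivFun.symm ?_) (b.equivFun.symm_apply_apply x)
    ext i
    simp [re]
  · refine b.equivFun.injective ?_
    change b.equivFun (b.equivFun.symm (re _)) = b.equivFun (T (b.equivFun.symm (re z)))
    rw [LinearEquiv.apply_symm_apply, b.equivFun_apply (T _), ← LinearMap.toMatrix_mulVec_repr b b,
      ← b.equivFun_apply, LinearEquiv.apply_symm_apply]
    ext i
    simp [re, Matrix.mulVec, dotProduct]

lemma exists_codisjoint_unstable_centerStable [FiniteDimensional ℝ E] (T : Module.End ℝ E) :
    ∃ s : ℝ, 0 < s ∧ s < 1 ∧ Codisjoint (unstableSubmodule T s) (centerStableSubmodule T) := by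
  obtain ⟨n, M, p, hp, hpM⟩ := exists_complex_semiconj T
  obtain ⟨s, hs0, hs1, hM⟩ := exists_codisjoint_unstable_centerStable_complex M
  have hpO : p =O[⊤] (id : (Fin n → ℂ) → Fin n → ℂ) := p.isBigO_id ⊤
  refine ⟨s, hs0, hs1, codisjoint_iff.2 (eq_top_iff.2 fun x _ => ?_)⟩
  obtain ⟨z, rfl⟩ := hp x
  obtain ⟨u, hu, v, hv, rfl⟩ := Submodule.mem_sup.1 (hM.eq_top ▸ Submodule.mem_top : z ∈ _)
  rw [map_add]
  exact add_mem (Submodule.mem_sup_left (map_mem_unstableSubmodule hpO hpM hu))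
    (Submodule.mem_sup_right (map_mem_centerStableSubmodule hpO hpM hv))

end Splitting

section Restriction

variable {E : Type*} [NormedAddCommGroup E] [NormedSpace ℝ E]

lemma isBigO_opNorm_pow [CompleteSpace E] (T : E →L[ℝ] E) {t : ℝ} (ht : 0 < t)
    (h : ∀ x, (fun n => (T ^ n) x) =O[atTop] fun n => t ^ n) :
    (fun n => ‖T ^ n‖) =O[atTop] fun n => t ^ n := by
  have ht' : ∀ n : ℕ, 0 < ‖t ^ n‖ := fun n => norm_pos_iff.2 (pow_pos ht n).ne'
  have hbound : ∀ x, ∃ C, ∀ n : ℕ, ‖((t ^ n)⁻¹ • T ^ n) x‖ ≤ C := fun x => by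
    obtain ⟨C, -, hC⟩ := bound_of_isBigO_nat_atTop (h x)
    refine ⟨C, fun n => ?_⟩
    rw [smul_apply, norm_smul, norm_inv, inv_mul_le_iff₀ (ht' n), mul_comm]
    exact hC (pow_pos ht n).ne'
  obtain ⟨C, hC⟩ := banach_steinhaus hbound
  refine IsBigO.of_bound C (Eventually.of_forall fun n => ?_)
  rw [norm_norm]
  simpa only [norm_smul, norm_inv, inv_mul_le_iff₀ (ht' n), mul_comm] using hC n

variable [FiniteDimensional ℝ E] (T : Module.End ℝ E)

/-- The restriction of `T` to its center-stable subspace. -/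
noncomputable def centerStableRestrict : centerStableSubmodule T →L[ℝ] centerStableSubmodule T :=
  LinearMap.toContinuousLinearMap
    (T.restrict fun _ hx => apply_mem_centerStableSubmodule_iff.2 hx)

lemma coe_centerStableRestrict_pow (n : ℕ) (x : centerStableSubmodule T) :
    ((centerStableRestrict T ^ n) x : E) = (T ^ n) x := by
  induction n with
  | zero => rfl
  | succ n ih =>
    rw [pow_succ', pow_succ', Module.End.mul_apply, ← ih]
    rfl

lemma isBigO_centerStableRestrict_pow {t : ℝ} (ht : 1 < t) :
    (fun n => ‖centerStableRestrict T ^ n‖) =O[atTop] fun n => t ^ n := by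
  refine isBigO_opNorm_pow _ (zero_lt_one.trans ht) fun x => ?_
  refine IsBigO.trans (IsBigO.of_bound 1 (Eventually.of_forall fun n => ?_))
    (mem_centerStableSubmodule.1 x.2 t ht)
  rw [one_mul, ← coe_centerStableRestrict_pow]
  rfl

variable {T} {s : ℝ}

/-- If `y` is a backward orbit of a center-stable vector, then `y n` is center-stable, so that
`‖y 0‖ = ‖T ^ n (y n)‖ = O((t * s) ^ n)` for every `t > 1`. -/
lemma disjoint_unstable_centerStable (hs0 : 0 < s) (hs1 : s < 1) :
    Disjoint (unstableSubmodule T s) (centerStableSubmodule T) := by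
  rw [Submodule.disjoint_def]
  rintro _ ⟨y, rfl, hy, hyO⟩ hxV
  obtain ⟨t, ht1, hts⟩ := exists_between ((one_lt_inv₀ hs0).2 hs1)
  have ht0 : 0 < t := zero_lt_one.trans ht1
  have hyV : ∀ n, y n ∈ centerStableSubmodule T := by
    intro n
    induction n with
    | zero => exact hxV
    | succ n ih => exact apply_mem_centerStableSubmodule_iff.1 ((hy n).symm ▸ ih)
  have hO : (fun _ : ℕ => y 0) =O[atTop] fun n => (t * s) ^ n := by
    simp only [mul_pow]
    refine IsBigO.trans (IsBigO.of_bound 1 (Eventually.of_forall fun n => ?_))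
      ((isBigO_centerStableRestrict_pow T ht1).mul hyO.norm_left)
    rw [← pow_apply_backwardOrbit hy n, ← coe_centerStableRestrict_pow T n ⟨y n, hyV n⟩, one_mul]
    exact ((centerStableRestrict T ^ n).le_opNorm ⟨y n, hyV n⟩).trans (le_abs_self _)
  have hlim : Tendsto (fun _ : ℕ => y 0) atTop (𝓝 0) :=
    hO.trans_tendsto (tendsto_pow_atTop_nhds_zero_of_lt_one (by positivity)
      (by rwa [← one_mul s⁻¹, lt_mul_inv_iff₀ hs0] at hts))
  exact tendsto_nhds_unique tendsto_const_nhds hlim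

lemma eq_zero_of_apply_eq_zero_of_mem_unstable (hs0 : 0 < s) (hs1 : s < 1) {x : E}
    (hx : x ∈ unstableSubmodule T s) (h : T x = 0) : x = 0 :=
  Submodule.disjoint_def.1 (disjoint_unstable_centerStable hs0 hs1) x hx
    (apply_mem_centerStableSubmodule_iff.1 (h ▸ zero_mem _))

/-- The restriction of `T` to its unstable subspace, where it is invertible. -/
noncomputable def unstableRestrict (hs0 : 0 < s) (hs1 : s < 1) :
    unstableSubmodule T s ≃L[ℝ] unstableSubmodule T s :=
  (LinearEquiv.ofBijective (T.restrict fun _ hx => apply_mem_unstableSubmodule hs0.ne' hx) <| by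
    refine ⟨(injective_iff_map_eq_zero _).2 fun x hx => ?_, ?_⟩
    · exact Subtype.ext (eq_zero_of_apply_eq_zero_of_mem_unstable hs0 hs1 x.2
        (congrArg Subtype.val hx))
    · rintro ⟨_, y, rfl, hy, hyO⟩
      exact ⟨⟨y 1, backwardOrbit_mem_unstableSubmodule hs0.ne' hy hyO 1⟩, Subtype.ext (hy 0)⟩
    ).toContinuousLinearEquiv

lemma isBigO_unstableRestrict_symm_pow (hs0 : 0 < s) (hs1 : s < 1) :
    (fun n => ‖((unstableRestrict (T := T) hs0 hs1).symm :
      unstableSubmodule T s →L[ℝ] unstableSubmodule T s) ^ n‖) =O[atTop] fun n => s ^ n := by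
  refine isBigO_opNorm_pow _ hs0 fun x => ?_
  obtain ⟨_, y, rfl, hy, hyO⟩ := x
  have hyU := backwardOrbit_mem_unstableSubmodule hs0.ne' hy hyO
  have hpow : ∀ n : ℕ, (((unstableRestrict (T := T) hs0 hs1).symm :
      unstableSubmodule T s →L[ℝ] unstableSubmodule T s) ^ n) ⟨y 0, hyU 0⟩ = ⟨y n, hyU n⟩ := by
    intro n
    induction n with
    | zero => rfl
    | succ n ih =>
      rw [pow_succ', mul_apply_eq_comp, ih]
      exact (ContinuousLinearEquiv.symm_apply_eq _).2 (Subtype.ext (hy n).symm)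
  refine IsBigO.trans ?_ hyO
  exact IsBigO.of_bound 1 (Eventually.of_forall fun n => by rw [hpow, one_mul]; rfl)

theorem exists_unstable_splitting (T : Module.End ℝ E) :
    ∃ (U V : Submodule ℝ E) (Φ : E ≃L[ℝ] U × V) (Au : U ≃L[ℝ] U) (Ac : V →L[ℝ] V),
      Function.Semiconj Φ T (Prod.map Au Ac) ∧
      (∃ s : ℝ, 0 < s ∧ s < 1 ∧
        (fun n => ‖(Au.symm : U →L[ℝ] U) ^ n‖) =O[atTop] fun n => s ^ n) ∧
      ∀ t : ℝ, 1 < t → (fun n => ‖Ac ^ n‖) =O[atTop] fun n => t ^ n := by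
  obtain ⟨s, hs0, hs1, hcod⟩ := exists_codisjoint_unstable_centerStable T
  have hcompl : IsCompl (unstableSubmodule T s) (centerStableSubmodule T) :=
    ⟨disjoint_unstable_centerStable hs0 hs1, hcod⟩
  let e := Submodule.prodEquivOfIsCompl _ _ hcompl
  have he : Function.Semiconj e (Prod.map (unstableRestrict hs0 hs1) (centerStableRestrict T)) T :=
    fun w => (map_add T (w.1 : E) w.2).symm
  exact ⟨_, _, e.symm.toContinuousLinearEquiv, unstableRestrict hs0 hs1, centerStableRestrict T,
    he.inverse_left e.left_inv e.right_inv,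
    ⟨s, hs0, hs1, isBigO_unstableRestrict_symm_pow hs0 hs1⟩,
    fun t ht => isBigO_centerStableRestrict_pow T ht⟩

end Restriction

section Packing

open MeasureTheory Module

lemma exists_maximal_pairwise {X : Type*} {R : X → X → Prop} (hsymm : ∀ x y, R x y → R y x)
    (hirr : ∀ x, ¬ R x x) (W : Set X) {M : ℕ}
    (hM : ∀ T : Finset X, (T : Set X) ⊆ W → (T : Set X).Pairwise R → T.card ≤ M) :
    ∃ T : Finset X, (T : Set X) ⊆ W ∧ (T : Set X).Pairwise R ∧ ∀ x ∈ W, ∃ t ∈ T, ¬ R x t := by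
  classical
  set cards : Set ℕ :=
    {k | ∃ T : Finset X, (T : Set X) ⊆ W ∧ (T : Set X).Pairwise R ∧ T.card = k}
  have hbdd : BddAbove cards := ⟨M, by rintro k ⟨T, hTW, hTR, rfl⟩; exact hM T hTW hTR⟩
  obtain ⟨T, hTW, hTR, hT⟩ := Nat.sSup_mem (s := cards) ⟨0, ∅, by simp, by simp, rfl⟩ hbdd
  refine ⟨T, hTW, hTR, fun x hx => ?_⟩
  by_contra! h
  have hxT : x ∉ T := fun hxT => hirr x (h x hxT)
  have hle : (insert x T).card ≤ sSup cards := by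
    refine le_csSup hbdd ⟨insert x T, ?_, ?_, rfl⟩
    · rw [Finset.coe_insert]
      exact Set.insert_subset hx hTW
    · rw [Finset.coe_insert, Set.pairwise_insert]
      exact ⟨hTR, fun t ht _ => ⟨h t ht, hsymm _ _ (h t ht)⟩⟩
  rw [Finset.card_insert_of_notMem hxT] at hle
  omega

lemma card_mul_measureReal_closedBall_le {E : Type*} [NormedAddCommGroup E] [MeasurableSpace E]
    [BorelSpace E] (μ : Measure E) [μ.IsAddHaarMeasure] {r : ℝ} {T : Finset E} {W : Set E}
    (hsep : (T : Set E).Pairwise fun x y => 2 * r < ‖x - y‖)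
    (hTW : ∀ x ∈ T, Metric.closedBall x r ⊆ W) (hW : μ W ≠ ⊤) :
    T.card * μ.real (Metric.closedBall 0 r) ≤ μ.real W := by
  have hdisj : (T : Set E).PairwiseDisjoint fun x => Metric.closedBall x r := fun x hx y hy hxy =>
    Metric.closedBall_disjoint_closedBall (by
      rw [dist_eq_norm]
      linarith [hsep hx hy hxy])
  calc T.card * μ.real (Metric.closedBall 0 r)
      = ∑ x ∈ T, μ.real (Metric.closedBall x r) := by
        simp only [μ.addHaar_real_closedBall_center _ r, Finset.sum_const, nsmul_eq_mul]
    _ = μ.real (⋃ x ∈ T, Metric.closedBall x r) :=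
        (measureReal_biUnion_finset hdisj (fun _ _ => Metric.isClosed_closedBall.measurableSet)
          fun x hx => measure_ne_top_of_subset (hTW x hx) hW).symm
    _ ≤ μ.real W := measureReal_mono (Set.iUnion₂_subset hTW) hW

variable {U V : Type*} [NormedAddCommGroup U] [NormedSpace ℝ U] [NormedAddCommGroup V]
  [NormedSpace ℝ V] [FiniteDimensional ℝ U] [FiniteDimensional ℝ V]

lemma measureReal_image_continuousLinearEquiv [MeasurableSpace U] [BorelSpace U] (μ : Measure U)
    [μ.IsAddHaarMeasure] (B : U ≃L[ℝ] U) (W : Set U) :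
    μ.real (B '' W) = |LinearMap.det (B : U →ₗ[ℝ] U)| * μ.real W := by
  rw [measureReal_def, μ.addHaar_image_continuousLinearEquiv, ENNReal.toReal_mul,
    ENNReal.toReal_ofReal (abs_nonneg _), measureReal_def]

lemma card_le_of_pairwise_one_lt_norm_sub (B : U ≃L[ℝ] U) {c : ℝ} (hc : 0 ≤ c)
    {T : Finset (U × V)} (hsep : (T : Set (U × V)).Pairwise fun x y => 1 < ‖x - y‖)
    (hT : ∀ x ∈ T, Metric.closedBall x (1 / 2) ⊆
      (B '' Metric.closedBall 0 2) ×ˢ Metric.closedBall 0 c) :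
    (T.card : ℝ) ≤ |LinearMap.det (B : U →ₗ[ℝ] U)| * 4 ^ finrank ℝ U * (2 * c) ^ finrank ℝ V := by
  borelize U V
  let μ : Measure U := Measure.addHaar
  let ν : Measure V := Measure.addHaar
  have hμ : 0 < μ.real (Metric.ball 0 1) :=
    ENNReal.toReal_pos (Metric.measure_ball_pos _ _ one_pos).ne' measure_ball_lt_top.ne
  have hν : 0 < ν.real (Metric.ball 0 1) :=
    ENNReal.toReal_pos (Metric.measure_ball_pos _ _ one_pos).ne' measure_ball_lt_top.ne
  have hcompact : IsCompact ((B '' Metric.closedBall 0 2) ×ˢ Metric.closedBall (0 : V) c) :=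
    ((isCompact_closedBall 0 2).image B.continuous).prod (isCompact_closedBall 0 c)
  have hvol := card_mul_measureReal_closedBall_le (μ.prod ν) (r := 1 / 2)
    (by simpa using hsep) hT hcompact.measure_lt_top.ne
  rw [← Prod.mk_zero_zero, ← closedBall_prod_same, measureReal_prod_prod, measureReal_prod_prod,
    measureReal_image_continuousLinearEquiv,
    μ.addHaar_real_closedBall 0 zero_le_two, μ.addHaar_real_closedBall 0 one_half_pos.le,
    ν.addHaar_real_closedBall 0 one_half_pos.le, ν.addHaar_real_closedBall 0 hc] at hvol
  refine le_of_mul_le_mul_right ?_ (mul_pos (mul_pos hμ hν)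
    (mul_pos (pow_pos one_half_pos (finrank ℝ U)) (pow_pos one_half_pos (finrank ℝ V))))
  refine Eq.trans_le (by ring) (hvol.trans_eq ?_)
  have hU : (4 : ℝ) ^ finrank ℝ U * (1 / 2) ^ finrank ℝ U = 2 ^ finrank ℝ U := by
    rw [← mul_pow]
    norm_num
  have hV : (2 * c) ^ finrank ℝ V * (1 / 2) ^ finrank ℝ V = c ^ finrank ℝ V := by
    rw [← mul_pow]
    ring
  rw [← hU, ← hV]
  ring

end Packing

section ProductDynamics

open Module

variable {U V : Type*} [NormedAddCommGroup U] [NormedSpace ℝ U] [NormedAddCommGroup V]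
  [NormedSpace ℝ V] {Bu : U ≃L[ℝ] U} {Bc : V →L[ℝ] V} {G : U × V → U × V}

lemma norm_fst_sub_sub_le (hG : LipschitzWith 1 fun z => G z - Prod.map Bu Bc z) (x y : U × V) :
    ‖(G x - G y).1 - Bu (x - y).1‖ ≤ ‖x - y‖ := by
  refine le_trans (le_of_eq ?_) ((norm_fst_le _).trans (hG.norm_sub_le x y) |>.trans_eq (one_mul _))
  simp only [Prod.fst_sub, Prod.map_fst, map_sub]
  congr 1
  abel

lemma norm_snd_sub_sub_le (hG : LipschitzWith 1 fun z => G z - Prod.map Bu Bc z) (x y : U × V) :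
    ‖(G x - G y).2 - Bc (x - y).2‖ ≤ ‖x - y‖ := by
  refine le_trans (le_of_eq ?_) ((norm_snd_le _).trans (hG.norm_sub_le x y) |>.trans_eq (one_mul _))
  simp only [Prod.snd_sub, Prod.map_snd, map_sub]
  congr 1
  abel

/-- Invariance of the cone `‖v‖ ≤ ‖u‖`: the first component of the difference is stretched at least
by the factor `1 + ‖Bc‖`, and the second one at most. -/
lemma norm_snd_sub_le_norm_fst_sub
    (hG : LipschitzWith 1 fun z => G z - Prod.map Bu Bc z)
    (hB : ‖(Bu.symm : U →L[ℝ] U)‖ * (2 + ‖Bc‖) ≤ 1) {x y : U × V}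
    (hxy : ‖(x - y).2‖ ≤ ‖(x - y).1‖) : ‖(G x - G y).2‖ ≤ ‖(G x - G y).1‖ := by
  have hnorm : ‖x - y‖ = ‖(x - y).1‖ := max_eq_left hxy
  have h1 := norm_fst_sub_sub_le hG x y
  have h2 := norm_snd_sub_sub_le hG x y
  rw [hnorm] at h1 h2
  have hfst : (1 + ‖Bc‖) * ‖(x - y).1‖ ≤ ‖(G x - G y).1‖ := by
    have hBu : ‖(x - y).1‖ ≤ ‖(Bu.symm : U →L[ℝ] U)‖ * ‖Bu (x - y).1‖ := by
      simpa using (Bu.symm : U →L[ℝ] U).le_opNorm (Bu (x - y).1)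
    have hexp : (2 + ‖Bc‖) * ‖(x - y).1‖ ≤ ‖Bu (x - y).1‖ := by
      calc (2 + ‖Bc‖) * ‖(x - y).1‖
          ≤ (2 + ‖Bc‖) * (‖(Bu.symm : U →L[ℝ] U)‖ * ‖Bu (x - y).1‖) := by gcongr
        _ = ‖(Bu.symm : U →L[ℝ] U)‖ * (2 + ‖Bc‖) * ‖Bu (x - y).1‖ := by ring
        _ ≤ ‖Bu (x - y).1‖ := mul_le_of_le_one_left (norm_nonneg _) hB
    rw [norm_sub_rev] at h1
    linarith [norm_le_norm_add_norm_sub' (Bu (x - y).1) (G x - G y).1]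
  have hsnd : ‖(G x - G y).2‖ ≤ (1 + ‖Bc‖) * ‖(x - y).1‖ := by
    have := Bc.le_opNorm_of_le hxy
    linarith [norm_le_norm_add_norm_sub' (G x - G y).2 (Bc (x - y).2)]
  exact hsnd.trans hfst

lemma surjective_fst_graph [CompleteSpace U] (hG : LipschitzWith 1 fun z => G z - Prod.map Bu Bc z)
    (hBu : ‖(Bu.symm : U →L[ℝ] U)‖ ≤ 1 / 2) {σ : U → V} (hσ : LipschitzWith 1 σ) :
    Function.Surjective fun w => (G (w, σ w)).1 := by
  have happrox : ApproximatesLinearOn (fun w => (G (w, σ w)).1) (Bu : U →L[ℝ] U) Set.univ 1 := by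
    intro w _ w' _
    refine (norm_fst_sub_sub_le hG (w, σ w) (w', σ w')).trans ?_
    simpa [Prod.norm_def] using hσ.norm_sub_le w w'
  refine happrox.surjective (Bu.subsingleton_or_nnnorm_symm_pos.imp_right fun hpos => ?_)
  rw [lt_inv_comm₀ one_pos hpos, inv_one, ← NNReal.coe_lt_coe]
  exact hBu.trans_lt one_half_lt_one

lemma exists_lipschitz_graph_image [CompleteSpace U]
    (hG : LipschitzWith 1 fun z => G z - Prod.map Bu Bc z)
    (hB : ‖(Bu.symm : U →L[ℝ] U)‖ * (2 + ‖Bc‖) ≤ 1) {σ : U → V} (hσ : LipschitzWith 1 σ) :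
    ∃ σ' : U → V, LipschitzWith 1 σ' ∧ ∀ z, ∃ w, G (w, σ w) = (z, σ' z) := by
  have hBu : ‖(Bu.symm : U →L[ℝ] U)‖ ≤ 1 / 2 := by
    nlinarith [norm_nonneg (Bu.symm : U →L[ℝ] U), norm_nonneg Bc]
  choose ω hω using surjective_fst_graph hG hBu hσ
  refine ⟨fun z => (G (ω z, σ (ω z))).2, LipschitzWith.of_dist_le_mul fun z z' => ?_,
    fun z => ⟨ω z, Prod.ext (hω z) rfl⟩⟩
  have hcone := norm_snd_sub_le_norm_fst_sub hG hB (x := (ω z, σ (ω z))) (y := (ω z', σ (ω z')))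
    (by simpa using hσ.norm_sub_le (ω z) (ω z'))
  rw [dist_eq_norm, dist_eq_norm, NNReal.coe_one, one_mul]
  simpa only [Prod.fst_sub, Prod.snd_sub, hω] using hcone

lemma exists_lipschitz_graph_iterate [CompleteSpace U]
    (hG : LipschitzWith 1 fun z => G z - Prod.map Bu Bc z)
    (hB : ‖(Bu.symm : U →L[ℝ] U)‖ * (2 + ‖Bc‖) ≤ 1) (k : ℕ) :
    ∃ σ : U → V, LipschitzWith 1 σ ∧ ∀ w, ∃ v, G^[k] (v, 0) = (w, σ w) := by
  induction k with
  | zero => exact ⟨0, LipschitzWith.const' 0, fun w => ⟨w, rfl⟩⟩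
  | succ k ih =>
    obtain ⟨σ, hσ, hk⟩ := ih
    obtain ⟨σ', hσ', hG'⟩ := exists_lipschitz_graph_image hG hB hσ
    refine ⟨σ', hσ', fun z => ?_⟩
    obtain ⟨w, hw⟩ := hG' z
    obtain ⟨v, hv⟩ := hk w
    exact ⟨v, by rw [Function.iterate_succ_apply', hv, hw]⟩

lemma norm_symm_pow_iterate_sub_le (hBu : ‖(Bu.symm : U →L[ℝ] U)‖ ≤ 1 / 2)
    (hG : ∀ x, ‖G x - Prod.map Bu Bc x‖ ≤ 1) (k : ℕ) (x : U × V) :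
    ‖(Bu ^ k).symm (G^[k] x).1 - x.1‖ ≤ 1 := by
  induction k generalizing x with
  | zero => exact (norm_le_zero_iff.2 (sub_self x.1)).trans zero_le_one
  | succ k ih =>
    have hhalf : ∀ z, ‖z‖ ≤ 1 → ‖Bu.symm z‖ ≤ 1 / 2 := fun z hz =>
      ((Bu.symm : U →L[ℝ] U).le_of_opNorm_le_of_le hBu hz).trans_eq (mul_one _)
    have hsplit : (Bu ^ (k + 1)).symm (G^[k + 1] x).1 - x.1 =
        Bu.symm ((Bu ^ k).symm (G^[k] (G x)).1 - (G x).1) + Bu.symm ((G x).1 - Bu x.1) := by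
      rw [← map_add, sub_add_sub_cancel, map_sub, Bu.symm_apply_apply, pow_succ]
      rfl
    rw [hsplit]
    exact (norm_add_le _ _).trans ((add_le_add (hhalf _ (ih (G x)))
      (hhalf _ ((norm_fst_le (G x - Prod.map Bu Bc x)).trans (hG x)))).trans_eq (add_halves 1))

lemma exists_iterate_fst_eq [CompleteSpace U]
    (hG : LipschitzWith 1 fun z => G z - Prod.map Bu Bc z)
    (hG' : ∀ x, ‖G x - Prod.map Bu Bc x‖ ≤ 1)
    (hB : ‖(Bu.symm : U →L[ℝ] U)‖ * (2 + ‖Bc‖) ≤ 1) (k : ℕ) {w : U} (hw : ‖w‖ ≤ 1) :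
    ∃ v, ‖v‖ ≤ 2 ∧ (G^[k] (v, 0)).1 = (Bu ^ k) w := by
  have hBu : ‖(Bu.symm : U →L[ℝ] U)‖ ≤ 1 / 2 := by
    nlinarith [norm_nonneg (Bu.symm : U →L[ℝ] U), norm_nonneg Bc]
  obtain ⟨σ, -, hσ⟩ := exists_lipschitz_graph_iterate hG hB k
  obtain ⟨v, hv⟩ := hσ ((Bu ^ k) w)
  have hclose := norm_symm_pow_iterate_sub_le hBu hG' k (v, 0)
  rw [hv, ContinuousLinearEquiv.symm_apply_apply] at hclose
  exact ⟨v, by linarith [norm_le_norm_add_norm_sub w v], by rw [hv]⟩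

lemma closedBall_subset_image_prod {V : Type*} [SeminormedAddCommGroup V]
    (hBu : ‖(Bu.symm : U →L[ℝ] U)‖ ≤ 1 / 2) {c : ℝ} {u : U} {x : U × V} (hu : ‖u‖ ≤ 1)
    (hx : ‖x.1 - Bu u‖ ≤ 1) (hc : ‖x.2‖ ≤ c) :
    Metric.closedBall x (1 / 2) ⊆
      (Bu '' Metric.closedBall 0 2) ×ˢ Metric.closedBall 0 (c + 1) := by
  intro y hy
  rw [mem_closedBall_iff_norm] at hy
  have hy1 := (norm_fst_le (y - x)).trans hy
  have hy2 := (norm_snd_le (y - x)).trans hy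
  rw [Prod.fst_sub] at hy1
  rw [Prod.snd_sub] at hy2
  refine ⟨⟨Bu.symm y.1, mem_closedBall_zero_iff.2 ?_, Bu.apply_symm_apply y.1⟩,
    mem_closedBall_zero_iff.2 ?_⟩
  · have hle : ‖Bu.symm (y.1 - Bu u)‖ ≤ 1 / 2 * (3 / 2) :=
      (Bu.symm : U →L[ℝ] U).le_of_opNorm_le_of_le hBu
        (by linarith [norm_sub_le_norm_sub_add_norm_sub y.1 x.1 (Bu u)])
    rw [map_sub, Bu.symm_apply_apply] at hle
    linarith [norm_le_norm_add_norm_sub' (Bu.symm y.1) u]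
  · linarith [norm_le_norm_add_norm_sub' y.2 x.2]

lemma exists_finset_cover_image_prod [FiniteDimensional ℝ U] [FiniteDimensional ℝ V]
    (hBu : ‖(Bu.symm : U →L[ℝ] U)‖ ≤ 1 / 2) {c : ℝ} (hc : 0 ≤ c) :
    ∃ T : Finset (U × V), (T.card : ℝ) ≤ |LinearMap.det (Bu : U →ₗ[ℝ] U)| * 4 ^ finrank ℝ U *
      (2 * (c + 1)) ^ finrank ℝ V ∧
      ∀ u x, ‖u‖ ≤ 1 → ‖x.1 - Bu u‖ ≤ 1 → ‖x.2‖ ≤ c → ∃ t ∈ T, ‖x - t‖ ≤ 1 := by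
  set W : Set (U × V) := {x | (∃ u, ‖u‖ ≤ 1 ∧ ‖x.1 - Bu u‖ ≤ 1) ∧ ‖x.2‖ ≤ c}
  have hcard (T : Finset (U × V)) (hTW : (T : Set (U × V)) ⊆ W)
      (hsep : (T : Set (U × V)).Pairwise fun x y => 1 < ‖x - y‖) :
      (T.card : ℝ) ≤ |LinearMap.det (Bu : U →ₗ[ℝ] U)| * 4 ^ finrank ℝ U *
        (2 * (c + 1)) ^ finrank ℝ V :=
    card_le_of_pairwise_one_lt_norm_sub Bu (by positivity) hsep fun x hx =>
      have ⟨⟨_, hu, hxu⟩, hxc⟩ := hTW hx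
      closedBall_subset_image_prod hBu hu hxu hxc
  obtain ⟨T, hTW, hsep, hT⟩ := exists_maximal_pairwise
    (R := fun x y : U × V => 1 < ‖x - y‖) (fun x y h => by rwa [norm_sub_rev])
    (fun x => by simp) W fun T hTW hsep => Nat.le_floor (hcard T hTW hsep)
  exact ⟨T, hcard T hTW hsep, fun u x hu hxu hxc =>
    have ⟨t, ht, hxt⟩ := hT x ⟨⟨u, hu, hxu⟩, hxc⟩
    ⟨t, ht, not_lt.1 hxt⟩⟩

lemma norm_inv_smul_le {E : Type*} [NormedAddCommGroup E] [NormedSpace ℝ E] {z : E} {r C : ℝ}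
    (hr : 0 < r) (hz : ‖z‖ ≤ r * C) : ‖r⁻¹ • z‖ ≤ C := by
  rwa [norm_smul, norm_inv, Real.norm_of_nonneg hr.le, inv_mul_le_iff₀ hr]

lemma exists_ball_image_cover [FiniteDimensional ℝ U] [FiniteDimensional ℝ V]
    (hG : LipschitzWith 1 fun z => G z - Prod.map Bu Bc z)
    (hBu : ‖(Bu.symm : U →L[ℝ] U)‖ ≤ 1 / 2) :
    ∃ K : ℕ, (K : ℝ) ≤ |LinearMap.det (Bu : U →ₗ[ℝ] U)| * 4 ^ finrank ℝ U *
      (2 * (‖Bc‖ + 2)) ^ finrank ℝ V ∧ ∀ (a : U × V) {r : ℝ}, 0 < r →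
      ∃ T : Finset (U × V), T.card ≤ K ∧ ∀ x, ‖x - a‖ ≤ r → ∃ t ∈ T, ‖G x - t‖ ≤ r := by
  classical
  obtain ⟨T, hTcard, hT⟩ := exists_finset_cover_image_prod (V := V) hBu (c := ‖Bc‖ + 1)
    (by positivity)
  refine ⟨T.card, hTcard.trans_eq (by ring), fun a r hr => ⟨T.image fun t => G a + r • t,
    Finset.card_image_le, fun x hx => ?_⟩⟩
  have hfst := (norm_fst_sub_sub_le hG x a).trans hx
  have hsnd := (norm_snd_sub_sub_le hG x a).trans hx
  have hsnd' : ‖(G x - G a).2‖ ≤ r * (‖Bc‖ + 1) := by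
    have := Bc.le_opNorm_of_le ((norm_snd_le (x - a)).trans hx)
    linarith [norm_le_norm_add_norm_sub' (G x - G a).2 (Bc (x - a).2)]
  obtain ⟨t, ht, hxt⟩ := hT (r⁻¹ • (x - a).1) (r⁻¹ • (G x - G a))
    (norm_inv_smul_le hr (by simpa using (norm_fst_le _).trans hx))
    (by
      rw [map_smul, Prod.smul_fst, ← smul_sub]
      exact norm_inv_smul_le hr (by simpa using hfst))
    (norm_inv_smul_le hr hsnd')
  refine ⟨_, Finset.mem_image_of_mem _ ht, ?_⟩
  have hrescale : G x - (G a + r • t) = r • (r⁻¹ • (G x - G a) - t) := by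
    rw [smul_sub, smul_inv_smul₀ hr.ne', sub_sub]
  rw [hrescale, norm_smul, Real.norm_of_nonneg hr.le]
  exact mul_le_of_le_one_right hr.le hxt

lemma det_coe_pow (B : U ≃L[ℝ] U) (k : ℕ) :
    LinearMap.det ((B ^ k : U ≃L[ℝ] U) : U →ₗ[ℝ] U) = LinearMap.det (B : U →ₗ[ℝ] U) ^ k := by
  rw [← map_pow]
  congr 1
  induction k with
  | zero => rfl
  | succ k ih =>
    rw [pow_succ, pow_succ, ← ih]
    rfl

end ProductDynamics

section Counting

variable {Y : Type*} [SeminormedAddCommGroup Y]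

lemma norm_sub_le_two_mul {x y a : Y} {r : ℝ} (hx : ‖x - a‖ ≤ r) (hy : ‖y - a‖ ≤ r) :
    ‖x - y‖ ≤ 2 * r := by
  have htri := norm_sub_le_norm_sub_add_norm_sub x a y
  rw [norm_sub_rev a] at htri
  linarith

lemma card_le_pow_of_separated {G : Y → Y} {K : ℕ} {r : ℝ}
    (hcov : ∀ a, ∃ T : Finset Y, T.card ≤ K ∧ ∀ x, ‖x - a‖ ≤ r → ∃ t ∈ T, ‖G x - t‖ ≤ r)
    {ι : Type*} (k : ℕ) (S : Finset ι) (x : ι → Y) (a : Y) (hx : ∀ i ∈ S, ‖x i - a‖ ≤ r)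
    (hsep : ∀ i ∈ S, ∀ j ∈ S, i ≠ j → ∃ l ≤ k, 2 * r < ‖G^[l] (x i) - G^[l] (x j)‖) :
    S.card ≤ K ^ k := by
  classical
  have hsep_pos {S : Finset ι} {x : ι → Y} {a : Y} (hx : ∀ i ∈ S, ‖x i - a‖ ≤ r) {i j : ι}
      (hi : i ∈ S) (hj : j ∈ S) {l : ℕ} (hl : 2 * r < ‖G^[l] (x i) - G^[l] (x j)‖) : l ≠ 0 := by
    rintro rfl
    exact hl.not_ge (norm_sub_le_two_mul (hx i hi) (hx j hj))
  induction k generalizing S x a with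
  | zero =>
    rw [pow_zero, Finset.card_le_one]
    intro i hi j hj
    by_contra hij
    obtain ⟨l, hl, h⟩ := hsep i hi j hj hij
    exact hsep_pos hx hi hj h (Nat.le_zero.1 hl)
  | succ k ih =>
    obtain ⟨T, hTK, hT⟩ := hcov a
    choose! τ hτ hτr using hT
    have hfiber : ∀ b ∈ T, (S.filter fun i => τ (x i) = b).card ≤ K ^ k := fun b _ => by
      refine ih _ (fun i => G (x i)) b (fun i hi => ?_) fun i hi j hj hij => ?_
      · obtain ⟨hiS, rfl⟩ := Finset.mem_filter.1 hi
        exact hτr _ (hx i hiS)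
      · have hi := (Finset.mem_filter.1 hi).1
        have hj := (Finset.mem_filter.1 hj).1
        obtain ⟨l, hl, h⟩ := hsep i hi j hj hij
        obtain ⟨l, rfl⟩ := Nat.exists_eq_succ_of_ne_zero (hsep_pos hx hi hj h)
        exact ⟨l, Nat.le_of_succ_le_succ hl, h⟩
    calc S.card ≤ K ^ k * T.card :=
          Finset.card_le_mul_card_image_of_maps_to (fun i hi => hτ _ (hx i hi)) _ hfiber
      _ ≤ K ^ (k + 1) := Nat.mul_le_mul_left _ hTK

end Counting

section Exponents

variable {a b : ℕ → ℝ}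

lemma isBigO_const_add_pow (hb : ∀ t : ℝ, 1 < t → b =O[atTop] fun n => t ^ n) (c : ℝ) {t : ℝ}
    (ht : 1 < t) : (fun n => c + b n) =O[atTop] fun n => t ^ n := by
  refine IsBigO.add (IsBigO.of_bound ‖c‖ (Eventually.of_forall fun n => ?_)) (hb t ht)
  rw [Real.norm_of_nonneg (pow_nonneg (zero_lt_one.trans ht).le n)]
  exact le_mul_of_one_le_right (norm_nonneg c) (one_le_pow₀ ht.le)

lemma tendsto_mul_const_add_zero {s : ℝ} (hs0 : 0 < s) (hs1 : s < 1)
    (ha : a =O[atTop] fun n => s ^ n) (hb : ∀ t : ℝ, 1 < t → b =O[atTop] fun n => t ^ n) (c : ℝ) :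
    Tendsto (fun n => a n * (c + b n)) atTop (𝓝 0) := by
  obtain ⟨t, ht, hts⟩ := exists_between ((one_lt_inv₀ hs0).2 hs1)
  have hst : s * t < 1 := by rwa [← lt_inv_mul_iff₀ hs0, mul_one]
  refine (ha.mul (isBigO_const_add_pow hb c ht)).trans_tendsto ?_
  simp only [← mul_pow]
  exact tendsto_pow_atTop_nhds_zero_of_lt_one
    (mul_nonneg hs0.le (zero_lt_one.trans ht).le) hst

lemma isLittleO_const_mul_pow_const_add_exp (hb : ∀ t : ℝ, 1 < t → b =O[atTop] fun n => t ^ n)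
    (C c : ℝ) (q : ℕ) {ε : ℝ} (hε : 0 < ε) :
    (fun n => C * (c + b n) ^ q) =o[atTop] fun n : ℕ => Real.exp (n * ε) := by
  have ht : 1 < Real.exp (ε / (q + 1)) := Real.one_lt_exp_iff.2 (by positivity)
  have htq : Real.exp (ε / (q + 1)) ^ q < Real.exp ε := by
    rw [← Real.exp_nat_mul, Real.exp_lt_exp, ← mul_div_assoc, div_lt_iff₀ (by positivity)]
    linarith
  simp only [Real.exp_nat_mul]
  refine (((isBigO_const_add_pow hb c ht).pow q).const_mul_left C).trans_isLittleO ?_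
  simp only [pow_right_comm _ _ q]
  exact isLittleO_pow_pow_of_lt_left (by positivity) htq

end Exponents

section SeparatedSets

variable {X : Type*} {ρ : X → X → ℝ} {f : X → X}

lemma lt_dynDist_iff {n : ℕ} {r : ℝ} (hr : 0 ≤ r) {x y : X} :
    r < dynDist ρ f n x y ↔ ∃ j < n, r < ρ (f^[j] x) (f^[j] y) := by
  rcases n with _ | n
  · simp [dynDist, hr]
  · rw [dynDist, lt_ciSup_iff (Set.finite_range _).bddAbove]
    exact ⟨fun ⟨j, hj⟩ => ⟨j, j.2, hj⟩, fun ⟨j, hjn, hj⟩ => ⟨⟨j, hjn⟩, hj⟩⟩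

/-- `f` has at most exponential orbit growth at rate `H`. The bound is on the cardinality of each
separated set because `sepNum` is `0` when these cardinalities are unbounded. -/
def SepGrowthLE (ρ : X → X → ℝ) (f : X → X) (H : ℝ) : Prop :=
  ∀ r, 0 < r → ∃ M : ℝ, ∀ n (S : Finset X), IsSeparated ρ f n r S → S.card ≤ M * Real.exp (n * H)

lemma tendsto_const_add_const_div (H c : ℝ) : Tendsto (fun n : ℕ => H + c / n) atTop (𝓝 H) := by
  simpa using (tendsto_const_div_atTop_nhds_zero_nat c).const_add H

namespace SepGrowthLE

variable {H r : ℝ}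

lemma bddAbove_card (hf : SepGrowthLE ρ f H) (hr : 0 < r) (n : ℕ) :
    BddAbove {k | ∃ S : Finset X, IsSeparated ρ f n r S ∧ S.card = k} := by
  obtain ⟨M, hM⟩ := hf r hr
  refine ⟨⌊M * Real.exp (n * H)⌋₊, ?_⟩
  rintro _ ⟨S, hS, rfl⟩
  exact Nat.le_floor (hM n S hS)

lemma card_le_sepNum (hf : SepGrowthLE ρ f H) (hr : 0 < r) {n : ℕ} {S : Finset X}
    (hS : IsSeparated ρ f n r S) : S.card ≤ sepNum ρ f n r :=
  le_csSup (hf.bddAbove_card hr n) ⟨S, hS, rfl⟩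

lemma exists_sepNum_le (hf : SepGrowthLE ρ f H) (hr : 0 < r) :
    ∃ M : ℝ, ∀ n, sepNum ρ f n r ≤ M * Real.exp (n * H) := by
  obtain ⟨M, hM⟩ := hf r hr
  refine ⟨M, fun n => ?_⟩
  obtain ⟨S, hS, hcard⟩ := Nat.sSup_mem (s := {k | ∃ S : Finset X, IsSeparated ρ f n r S ∧
    S.card = k}) ⟨0, ∅, by simp [IsSeparated], rfl⟩ (hf.bddAbove_card hr n)
  exact (congrArg Nat.cast hcard).ge.trans (hM n S hS)

lemma sepNum_pos [Nonempty X] (hf : SepGrowthLE ρ f H) (hr : 0 < r) (n : ℕ) :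
    0 < sepNum ρ f n r := by
  inhabit X
  refine zero_lt_one.trans_le (hf.card_le_sepNum (S := {default}) hr ?_)
  simp [IsSeparated]

lemma exists_log_sepNum_div_le [Nonempty X] (hf : SepGrowthLE ρ f H) (hr : 0 < r) :
    ∃ c : ℝ, ∀ᶠ n : ℕ in atTop, Real.log (sepNum ρ f n r) / n ≤ H + c / n := by
  obtain ⟨M, hM⟩ := hf.exists_sepNum_le hr
  refine ⟨Real.log M, (eventually_gt_atTop 0).mono fun n hn => ?_⟩
  have hpos : (0 : ℝ) < sepNum ρ f n r := Nat.cast_pos.2 (hf.sepNum_pos hr n)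
  have hM0 : 0 < M := pos_of_mul_pos_left (hpos.trans_le (hM n)) (Real.exp_pos _).le
  have hlog := Real.log_le_log hpos (hM n)
  rw [Real.log_mul hM0.ne' (Real.exp_pos _).ne', Real.log_exp] at hlog
  have hn' : (0 : ℝ) < n := Nat.cast_pos.2 hn
  rw [div_le_iff₀ hn', add_mul, div_mul_cancel₀ _ hn'.ne']
  linarith

lemma isBoundedUnder [Nonempty X] (hf : SepGrowthLE ρ f H) (hr : 0 < r) :
    IsBoundedUnder (· ≤ ·) atTop fun n : ℕ => Real.log (sepNum ρ f n r) / n := by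
  obtain ⟨c, hc⟩ := hf.exists_log_sepNum_div_le hr
  exact (tendsto_const_add_const_div H c).isBoundedUnder_le.mono_le hc

lemma limsup_le [Nonempty X] (hf : SepGrowthLE ρ f H) (hr : 0 < r) :
    limsup (fun n : ℕ => Real.log (sepNum ρ f n r) / n) atTop ≤ H := by
  obtain ⟨c, hc⟩ := hf.exists_log_sepNum_div_le hr
  have hbelow : IsBoundedUnder (· ≥ ·) atTop fun n : ℕ => Real.log (sepNum ρ f n r) / n :=
    isBoundedUnder_of_eventually_ge (a := 0) (Eventually.of_forall fun n =>
      div_nonneg (Real.log_natCast_nonneg _) (Nat.cast_nonneg n))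
  have hlim := tendsto_const_add_const_div H c
  exact (limsup_le_limsup hc hbelow.isCoboundedUnder_le hlim.isBoundedUnder_le).trans_eq
    hlim.limsup_eq

lemma topEnt_le [Nonempty X] (hf : SepGrowthLE ρ f H) : topEnt ρ f ≤ H :=
  have : Nonempty {e : ℝ // 0 < e} := ⟨⟨1, one_pos⟩⟩
  ciSup_le fun r => hf.limsup_le r.2

lemma le_topEnt [Nonempty X] (hf : SepGrowthLE ρ f H) (hr : 0 < r) {N : ℕ} (hN : 0 < N)
    {C h : ℝ} (hlow : ∀ k : ℕ, Real.exp (N * k * h) ≤ C * sepNum ρ f (N * k + 1) r) :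
    h ≤ topEnt ρ f := by
  refine le_trans ?_ (le_ciSup (f := fun e : {e : ℝ // 0 < e} =>
    limsup (fun n : ℕ => Real.log (sepNum ρ f n e) / n) atTop)
    ⟨H, by rintro _ ⟨e, rfl⟩; exact hf.limsup_le e.2⟩ ⟨r, hr⟩)
  refine le_of_forall_lt_imp_le_of_dense fun b hb =>
    le_limsup_of_frequently_le ?_ (hf.isBoundedUnder hr)
  have hsubseq : Tendsto (fun k : ℕ => N * k + 1) atTop atTop :=
    (tendsto_add_atTop_nat 1).comp (tendsto_id.const_mul_atTop' hN)
  refine hsubseq.frequently (Eventually.frequently ?_)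
  filter_upwards [hsubseq.eventually
    ((tendsto_const_add_const_div h (-(h + Real.log C))).eventually_const_lt hb)] with k hk
  refine hk.le.trans ?_
  have hpos : (0 : ℝ) < sepNum ρ f (N * k + 1) r := Nat.cast_pos.2 (hf.sepNum_pos hr _)
  have hC : 0 < C := pos_of_mul_pos_left ((Real.exp_pos _).trans_le (hlow k)) hpos.le
  have hlog := Real.log_le_log (Real.exp_pos _) (hlow k)
  rw [Real.log_mul hC.ne' hpos.ne', Real.log_exp] at hlog
  have hn : ((N * k + 1 : ℕ) : ℝ) ≠ 0 := Nat.cast_ne_zero.2 (Nat.succ_ne_zero _)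
  rw [le_div_iff₀ (by positivity), add_mul, div_mul_cancel₀ _ hn]
  push_cast
  linarith

lemma exists_isSeparated_spanning (hf : SepGrowthLE ρ f H) (hsymm : ∀ x y, ρ x y = ρ y x)
    (hself : ∀ x, ρ x x ≤ 0) (hr : 0 < r) (n : ℕ) (W : Set X) :
    ∃ T : Finset X, (T : Set X) ⊆ W ∧ T.card ≤ sepNum ρ f n r ∧
      ∀ x ∈ W, ∃ y ∈ T, ∀ j < n, ρ (f^[j] x) (f^[j] y) ≤ r := by
  have hsep {T : Finset X} (hT : (T : Set X).Pairwise fun x y => r < dynDist ρ f n x y) :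
      T.card ≤ sepNum ρ f n r :=
    hf.card_le_sepNum hr fun x hx y hy hxy => hT hx hy hxy
  obtain ⟨T, hTW, hTsep, hT⟩ := exists_maximal_pairwise
    (R := fun x y => r < dynDist ρ f n x y)
    (fun x y h => by simpa only [dynDist, hsymm] using h)
    (fun x h => by
      obtain ⟨j, -, hj⟩ := (lt_dynDist_iff hr.le).1 h
      exact (hr.trans hj).not_ge (hself _))
    W fun T _ => hsep
  refine ⟨T, hTW, hsep hTsep, fun x hx => ?_⟩
  obtain ⟨y, hy, hxy⟩ := hT x hx
  exact ⟨y, hy, fun j hj => not_lt.1 fun h => hxy ((lt_dynDist_iff hr.le).2 ⟨j, hj, h⟩)⟩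

end SepGrowthLE

end SeparatedSets

section TorusLifts

variable {d : ℕ}

lemma latVec_zero : latVec (0 : Fin d → ℤ) = 0 := by
  ext i
  simp [latVec]

lemma latVec_add (m m' : Fin d → ℤ) : latVec (m + m') = latVec m + latVec m' := by
  ext i
  simp [latVec]

lemma latVec_neg (m : Fin d → ℤ) : latVec (-m) = -latVec m := by
  ext i
  simp [latVec]

lemma abs_le_of_norm_latVec_le {m : Fin d → ℤ} {R : ℝ} (h : ‖latVec m‖ ≤ R) (i : Fin d) :
    |(m i : ℝ)| ≤ R :=
  (norm_le_pi_norm (latVec m) i).trans h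

lemma eq_zero_of_norm_latVec_lt_one {m : Fin d → ℤ} (h : ‖latVec m‖ < 1) : m = 0 := by
  funext i
  have hi := (abs_le_of_norm_latVec_le le_rfl i).trans_lt h
  exact Int.abs_lt_one_iff.1 (by exact_mod_cast hi)

lemma finite_setOf_norm_latVec_le (R : ℝ) : {m : Fin d → ℤ | ‖latVec m‖ ≤ R}.Finite := by
  refine (Set.finite_Icc (fun _ => -⌊R⌋) fun _ => ⌊R⌋).subset fun m hm => ?_
  have hm' i : |m i| ≤ ⌊R⌋ := Int.le_floor.2 (by exact_mod_cast abs_le_of_norm_latVec_le hm i)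
  exact ⟨fun i => (abs_le.1 (hm' i)).1, fun i => (abs_le.1 (hm' i)).2⟩

lemma exists_add_latVec_mem_Icc (x : Fin d → ℝ) :
    ∃ m : Fin d → ℤ, x + latVec m ∈ Set.Icc (0 : Fin d → ℝ) 1 := by
  refine ⟨-fun i => ⌊x i⌋, ?_⟩
  rw [latVec_neg, ← sub_eq_add_neg]
  exact ⟨fun i => Int.fract_nonneg (x i), fun i => (Int.fract_lt_one (x i)).le⟩

lemma distQ_le_norm (u w : Fin d → ℝ) : distQ u w ≤ ‖u - w‖ :=
  (ciInf_le ⟨0, by rintro _ ⟨m, rfl⟩; exact norm_nonneg _⟩ 0).trans_eq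
    (by rw [latVec_zero, sub_zero])

lemma distQ_self_nonpos (u : Fin d → ℝ) : distQ u u ≤ 0 :=
  (distQ_le_norm u u).trans_eq (by rw [sub_self, norm_zero])

lemma distQ_comm (u w : Fin d → ℝ) : distQ u w = distQ w u := by
  refine (Equiv.neg (Fin d → ℤ)).iInf_congr fun m => ?_
  rw [← norm_neg, Equiv.neg_apply, latVec_neg]
  congr 1
  abel

lemma distQ_add_latVec_right (u w : Fin d → ℝ) (m : Fin d → ℤ) :
    distQ u (w + latVec m) = distQ u w := by
  refine (Equiv.addRight m).iInf_congr fun l => ?_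
  rw [Equiv.coe_addRight, latVec_add]
  congr 1
  abel

lemma exists_norm_sub_add_latVec_lt {u w : Fin d → ℝ} {c : ℝ} (h : distQ u w < c) :
    ∃ m : Fin d → ℤ, ‖u - (w + latVec m)‖ < c := by
  simpa only [sub_sub] using exists_lt_of_ciInf_lt h

/-- `F` is the lift of a self-map of the torus `ℝ^d / ℤ^d`. -/
def IsTorusLift (F : (Fin d → ℝ) → (Fin d → ℝ)) : Prop :=
  ∀ x m, ∃ m', F (x + latVec m) = F x + latVec m'

namespace IsTorusLift

variable {F : (Fin d → ℝ) → (Fin d → ℝ)}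

lemma iterate (hF : IsTorusLift F) (n : ℕ) : IsTorusLift F^[n] := by
  induction n with
  | zero => exact fun x m => ⟨m, rfl⟩
  | succ n ih =>
    intro x m
    obtain ⟨m', hm'⟩ := ih x m
    obtain ⟨m'', hm''⟩ := hF (F^[n] x) m'
    exact ⟨m'', by rw [Function.iterate_succ_apply', hm', hm'', Function.iterate_succ_apply']⟩

lemma distQ_apply_add_latVec_right (hF : IsTorusLift F) (u x : Fin d → ℝ) (m : Fin d → ℤ) :
    distQ u (F (x + latVec m)) = distQ u (F x) := by
  obtain ⟨m', hm'⟩ := hF x m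
  rw [hm', distQ_add_latVec_right]

lemma distQ_apply_add_latVec_left (hF : IsTorusLift F) (u x : Fin d → ℝ) (m : Fin d → ℤ) :
    distQ (F (x + latVec m)) u = distQ (F x) u := by
  rw [distQ_comm, hF.distQ_apply_add_latVec_right, distQ_comm]

end IsTorusLift

end TorusLifts

section UpperBound

variable {d : ℕ} {Y : Type*} [NormedAddCommGroup Y] {F : (Fin d → ℝ) → (Fin d → ℝ)}

lemma exists_pos_forall_norm_sub_le_of_uniformContinuous {ι X Z : Type*} [SeminormedAddCommGroup X]
    [SeminormedAddCommGroup Z] {f : ι → X → Z} (hf : ∀ i, UniformContinuous (f i)) (s : Finset ι)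
    {r : ℝ} (hr : 0 < r) :
    ∃ δ > 0, ∀ x y, ‖x - y‖ ≤ δ → ∀ i ∈ s, ‖f i x - f i y‖ ≤ r := by
  have hev : ∀ᶠ p : X × X in uniformity X, ∀ i ∈ s, dist (f i p.1) (f i p.2) < r :=
    (Filter.eventually_all_finset s).2 fun i _ => hf i (Metric.dist_mem_uniformity hr)
  obtain ⟨δ, hδ, h⟩ := Metric.mem_uniformity_dist.1 hev
  refine ⟨δ / 2, half_pos hδ, fun x y hxy i hi => ?_⟩
  rw [← dist_eq_norm] at hxy ⊢
  exact (h (hxy.trans_lt (half_lt_self hδ)) i hi).le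

lemma exists_finset_forall_norm_add_latVec_sub_le {Φ : (Fin d → ℝ) → Y} (hΦ : Continuous Φ)
    {δ : ℝ} (hδ : 0 < δ) :
    ∃ t : Finset Y, ∀ x, ∃ m : Fin d → ℤ, ∃ a ∈ t, ‖Φ (x + latVec m) - a‖ ≤ δ := by
  obtain ⟨t, -, htfin, ht⟩ :=
    ((isCompact_Icc (a := (0 : Fin d → ℝ)) (b := 1)).image hΦ).finite_cover_balls hδ
  refine ⟨htfin.toFinset, fun x => ?_⟩
  obtain ⟨m, hm⟩ := exists_add_latVec_mem_Icc x
  obtain ⟨a, ha, hma⟩ := Set.mem_iUnion₂.1 (ht ⟨_, hm, rfl⟩)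
  exact ⟨m, a, htfin.mem_toFinset.2 ha, (mem_ball_iff_norm.1 hma).le⟩

variable [NormedSpace ℝ Y]

theorem exists_card_le_mul_pow_of_isSeparated (hF : IsTorusLift F) (hFc : UniformContinuous F)
    (Φ : (Fin d → ℝ) ≃L[ℝ] Y) {G : Y → Y} {N : ℕ} (hN : 0 < N) (hG : Function.Semiconj Φ F^[N] G)
    {K : ℕ} (hcov : ∀ (a : Y) {r : ℝ}, 0 < r → ∃ T : Finset Y, T.card ≤ K ∧
      ∀ x, ‖x - a‖ ≤ r → ∃ t ∈ T, ‖G x - t‖ ≤ r) {r : ℝ} (hr : 0 < r) :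
    ∃ M : ℕ, ∀ n (S : Finset (Fin d → ℝ)), IsSeparated distQ F n r S →
      S.card ≤ M * K ^ (n / N) := by
  classical
  obtain ⟨δ, hδ, hclose⟩ := exists_pos_forall_norm_sub_le_of_uniformContinuous
    (fun i => (UniformContinuous.iterate F i hFc).comp
      (Φ.symm : Y →L[ℝ] Fin d → ℝ).uniformContinuous) (Finset.range N) hr
  obtain ⟨t, ht⟩ := exists_finset_forall_norm_add_latVec_sub_le Φ.continuous (half_pos hδ)
  choose m a hat hma using ht
  refine ⟨t.card, fun n S hS => ?_⟩
  rw [mul_comm]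
  refine Finset.card_le_mul_card_image_of_maps_to (fun x _ => hat x) _ fun b _ => ?_
  refine card_le_pow_of_separated (fun a => hcov a (half_pos hδ)) (n / N) _
    (fun x => Φ (x + latVec (m x))) b (fun x hx => ?_) fun x hx y hy hxy => ?_
  · obtain ⟨-, rfl⟩ := Finset.mem_filter.1 hx
    exact hma x
  · obtain ⟨j, hjn, hj⟩ := (lt_dynDist_iff hr.le).1
      (hS x (Finset.mem_filter.1 hx).1 y (Finset.mem_filter.1 hy).1 hxy)
    refine ⟨j / N, Nat.div_le_div_right hjn.le, ?_⟩
    rw [mul_div_cancel₀ _ two_ne_zero]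
    by_contra! hle
    have hconj z : F^[j % N] (Φ.symm (G^[j / N] (Φ z))) = F^[j] z := by
      rw [← (hG.iterate_right (j / N)).eq, Φ.symm_apply_apply, ← Function.iterate_mul,
        ← Function.iterate_add_apply, Nat.mod_add_div]
    have hnorm := hclose _ _ hle (j % N) (Finset.mem_range.2 (Nat.mod_lt j hN))
    simp only [Function.comp_apply, ContinuousLinearEquiv.coe_coe, hconj] at hnorm
    rw [← (hF.iterate j).distQ_apply_add_latVec_left _ x (m x),
      ← (hF.iterate j).distQ_apply_add_latVec_right _ y (m y)] at hj
    exact (hj.trans_le (distQ_le_norm _ _)).not_ge hnorm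

theorem sepGrowthLE_of_semiconj (hF : IsTorusLift F) (hFc : UniformContinuous F)
    (Φ : (Fin d → ℝ) ≃L[ℝ] Y) {G : Y → Y} {N : ℕ} (hN : 0 < N) (hG : Function.Semiconj Φ F^[N] G)
    {K : ℕ} (hcov : ∀ (a : Y) {r : ℝ}, 0 < r → ∃ T : Finset Y, T.card ≤ K ∧
      ∀ x, ‖x - a‖ ≤ r → ∃ t ∈ T, ‖G x - t‖ ≤ r) {H : ℝ} (hK : K ≤ Real.exp (N * H)) :
    SepGrowthLE distQ F H := by
  have hK1 : 1 ≤ K := by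
    obtain ⟨T, hTK, hT⟩ := hcov 0 one_pos
    obtain ⟨t, ht, -⟩ := hT 0 (by simp)
    exact (Finset.card_pos.2 ⟨t, ht⟩).trans_le hTK
  have hH : 0 ≤ H := by
    have hexp := (Nat.one_le_cast.2 hK1).trans hK
    rw [Real.one_le_exp_iff] at hexp
    exact nonneg_of_mul_nonneg_right hexp (Nat.cast_pos.2 hN)
  intro r hr
  obtain ⟨M, hM⟩ := exists_card_le_mul_pow_of_isSeparated hF hFc Φ hN hG hcov hr
  refine ⟨M, fun n S hS => ?_⟩
  calc (S.card : ℝ) ≤ M * (K : ℝ) ^ (n / N) := by exact_mod_cast hM n S hS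
    _ ≤ M * Real.exp (N * H) ^ (n / N) := by gcongr
    _ = M * Real.exp (((n / N : ℕ) * N : ℕ) * H) := by
      rw [← Real.exp_nat_mul]
      push_cast
      ring_nf
    _ ≤ M * Real.exp (n * H) := by
      gcongr
      exact Nat.div_mul_le_self n N

end UpperBound

section LowerBound

open MeasureTheory

variable {d : ℕ} {F : (Fin d → ℝ) → (Fin d → ℝ)}

lemma exists_pos_forall_norm_sub_add_le_one_of_uniformContinuous {X Z : Type*}
    [SeminormedAddCommGroup X] [SeminormedAddCommGroup Z] {f : X → Z} (hf : UniformContinuous f) :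
    ∃ r > 0, ∀ x y, ‖x - y‖ < 2 * r → ‖f x - f y‖ + 2 * r ≤ 1 := by
  obtain ⟨δ, hδ, h⟩ := Metric.uniformContinuous_iff.1 hf (1 / 2) (by norm_num)
  simp only [dist_eq_norm] at h
  refine ⟨min δ (1 / 2) / 2, by positivity, fun x y hxy => ?_⟩
  rw [mul_div_cancel₀ _ two_ne_zero] at hxy ⊢
  linarith [h (hxy.trans_le (min_le_left _ _)), min_le_right δ (1 / 2)]

lemma norm_iterate_sub_lt_of_distQ_lt {c : ℝ} (hFc : ∀ x y, ‖x - y‖ < c → ‖F x - F y‖ + c ≤ 1)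
    {x y : Fin d → ℝ} {n : ℕ} (h0 : ‖x - y‖ < c)
    (h : ∀ j < n + 1, distQ (F^[j] x) (F^[j] y) < c) : ‖F^[n] x - F^[n] y‖ < c := by
  induction n with
  | zero => exact h0
  | succ n ih =>
    have hn := ih fun j hj => h j (hj.trans n.succ.lt_succ_self)
    obtain ⟨m, hm⟩ := exists_norm_sub_add_latVec_lt (h (n + 1) n.succ.lt_succ_self)
    have hFn := hFc _ _ hn
    rw [← Function.iterate_succ_apply' F, ← Function.iterate_succ_apply' F] at hFn
    have hm1 : ‖latVec m‖ < 1 := by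
      have := norm_sub_norm_le (latVec m) (F^[n + 1] x - F^[n + 1] y)
      rw [norm_sub_rev (latVec m), sub_sub] at this
      linarith
    rwa [eq_zero_of_norm_latVec_lt_one hm1, latVec_zero, add_zero] at hm

lemma exists_translate_iterate_close (hF : IsTorusLift F) {r : ℝ}
    (hr : 0 < r) (hFr : ∀ x y, ‖x - y‖ < 2 * r → ‖F x - F y‖ + 2 * r ≤ 1) {x y : Fin d → ℝ} {n : ℕ}
    (h : ∀ j < n + 1, distQ (F^[j] x) (F^[j] y) ≤ r) :
    ∃ m : Fin d → ℤ, ‖latVec m‖ ≤ 2 * r + ‖x - y‖ ∧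
      ‖F^[n] x - F^[n] (y + latVec m)‖ < 2 * r := by
  have hlt : ∀ j < n + 1, distQ (F^[j] x) (F^[j] y) < 2 * r := fun j hj =>
    (h j hj).trans_lt (by linarith)
  obtain ⟨m, hm⟩ := exists_norm_sub_add_latVec_lt (hlt 0 n.succ_pos)
  refine ⟨m, ?_, norm_iterate_sub_lt_of_distQ_lt hFr hm fun j hj => ?_⟩
  · have := norm_sub_norm_le (latVec m) (x - y)
    rw [norm_sub_rev (latVec m), sub_sub] at this
    exact (sub_le_iff_le_add.1 this).trans (by gcongr; exact hm.le)
  · rw [(hF.iterate j).distQ_apply_add_latVec_right]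
    exact hlt j hj

variable {Z : Type*} [NormedAddCommGroup Z] [MeasurableSpace Z] [BorelSpace Z]

lemma measureReal_le_card_mul_of_forall_exists_norm_sub_le [ProperSpace Z] (μ : Measure Z)
    [μ.IsAddHaarMeasure] {ι : Type*} (s : Finset ι) (z : ι → Z) {ρ : ℝ} {W : Set Z}
    (hW : ∀ w ∈ W, ∃ i ∈ s, ‖w - z i‖ ≤ ρ) :
    μ.real W ≤ s.card * μ.real (Metric.closedBall 0 ρ) := by
  have hcover : W ⊆ ⋃ i ∈ s, Metric.closedBall (z i) ρ := fun w hw =>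
    have ⟨i, hi, hwi⟩ := hW w hw
    Set.mem_iUnion₂.2 ⟨i, hi, mem_closedBall_iff_norm.2 hwi⟩
  have hfin : μ (⋃ i ∈ s, Metric.closedBall (z i) ρ) ≠ ⊤ :=
    ((s.isCompact_biUnion fun i _ => isCompact_closedBall (z i) ρ).measure_lt_top).ne
  calc μ.real W ≤ μ.real (⋃ i ∈ s, Metric.closedBall (z i) ρ) := measureReal_mono hcover hfin
    _ ≤ ∑ i ∈ s, μ.real (Metric.closedBall (z i) ρ) := measureReal_biUnion_finset_le _ _
    _ = s.card * μ.real (Metric.closedBall 0 ρ) := by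
      simp only [μ.addHaar_real_closedBall_center _ ρ, Finset.sum_const, nsmul_eq_mul]

theorem exists_measureReal_image_iterate_le [ProperSpace Z] (μ : Measure Z) [μ.IsAddHaarMeasure]
    {p : (Fin d → ℝ) → Z} {P : NNReal} (hp : LipschitzWith P p) {W : Set (Fin d → ℝ)}
    (hW : Bornology.IsBounded W) (hF : IsTorusLift F) {r H : ℝ} (hr : 0 < r)
    (hFr : ∀ x y, ‖x - y‖ < 2 * r → ‖F x - F y‖ + 2 * r ≤ 1) (hFH : SepGrowthLE distQ F H) :
    ∃ C : ℝ, ∀ n, μ.real ((p ∘ F^[n]) '' W) ≤ C * sepNum distQ F (n + 1) r := by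
  obtain ⟨R, hR⟩ := Metric.isBounded_iff.1 hW
  set ms : Finset (Fin d → ℤ) := (finite_setOf_norm_latVec_le (2 * r + R)).toFinset
  refine ⟨ms.card * μ.real (Metric.closedBall 0 (P * (2 * r))), fun n => ?_⟩
  obtain ⟨T, hTW, hTcard, hT⟩ :=
    hFH.exists_isSeparated_spanning distQ_comm distQ_self_nonpos hr (n + 1) W
  have hcover : ∀ w ∈ (p ∘ F^[n]) '' W, ∃ i ∈ T ×ˢ ms,
      ‖w - p (F^[n] (i.1 + latVec i.2))‖ ≤ P * (2 * r) := by
    rintro _ ⟨x, hx, rfl⟩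
    obtain ⟨y, hy, hxy⟩ := hT x hx
    obtain ⟨m, hm, hclose⟩ := exists_translate_iterate_close hF hr hFr hxy
    have hmR : ‖latVec m‖ ≤ 2 * r + R :=
      hm.trans (by gcongr; exact (dist_eq_norm x y).ge.trans (hR hx (hTW hy)))
    exact ⟨(y, m), Finset.mem_product.2 ⟨hy, (Set.Finite.mem_toFinset _).2 hmR⟩,
      (hp.norm_sub_le _ _).trans (by gcongr)⟩
  calc μ.real ((p ∘ F^[n]) '' W)
      ≤ (T ×ˢ ms).card * μ.real (Metric.closedBall 0 (P * (2 * r))) :=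
        measureReal_le_card_mul_of_forall_exists_norm_sub_le μ _ _ hcover
    _ = ms.card * μ.real (Metric.closedBall 0 (P * (2 * r))) * T.card := by
      rw [Finset.card_product]
      push_cast
      ring
    _ ≤ _ := by gcongr

theorem le_topEnt_of_semiconj {U V : Type*} [NormedAddCommGroup U] [NormedSpace ℝ U]
    [NormedAddCommGroup V] [NormedSpace ℝ V] [FiniteDimensional ℝ U] (hF : IsTorusLift F)
    (hFc : UniformContinuous F) {H : ℝ} (hFH : SepGrowthLE distQ F H)
    (Φ : (Fin d → ℝ) ≃L[ℝ] U × V) {G : U × V → U × V} {N : ℕ} (hN : 0 < N)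
    (hG : Function.Semiconj Φ F^[N] G) {Bu : U ≃L[ℝ] U}
    (hBu : ∀ k w, ‖w‖ ≤ 1 → ∃ v, ‖v‖ ≤ 2 ∧ (G^[k] (v, 0)).1 = (Bu ^ k) w)
    {h : ℝ} (hdet : |LinearMap.det (Bu : U →ₗ[ℝ] U)| = Real.exp (N * h)) :
    h ≤ topEnt distQ F := by
  borelize U
  obtain ⟨r, hr, hFr⟩ := exists_pos_forall_norm_sub_add_le_one_of_uniformContinuous hFc
  let μ : Measure U := Measure.addHaar
  have hball : 0 < μ.real (Metric.closedBall 0 1) :=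
    ENNReal.toReal_pos (Metric.measure_closedBall_pos _ _ one_pos).ne' measure_closedBall_lt_top.ne
  set W : Set (Fin d → ℝ) := (fun v => Φ.symm (v, 0)) '' Metric.closedBall 0 2
  set p : (Fin d → ℝ) →L[ℝ] U := (ContinuousLinearMap.fst ℝ U V).comp (Φ : _ →L[ℝ] U × V)
  have hWc : IsCompact W := (isCompact_closedBall 0 2).image (by fun_prop)
  obtain ⟨C, hC⟩ := exists_measureReal_image_iterate_le μ p.lipschitz hWc.isBounded hF hr hFr hFH
  refine hFH.le_topEnt hr hN (C := C / μ.real (Metric.closedBall 0 1)) fun k => ?_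
  have hsub : (Bu ^ k) '' Metric.closedBall 0 1 ⊆ (p ∘ F^[N * k]) '' W := by
    rintro _ ⟨w, hw, rfl⟩
    obtain ⟨v, hv, hvw⟩ := hBu k w (mem_closedBall_zero_iff.1 hw)
    refine ⟨Φ.symm (v, 0), ⟨v, mem_closedBall_zero_iff.2 hv, rfl⟩, ?_⟩
    rw [← hvw, ← Φ.apply_symm_apply (v, 0), ← (hG.iterate_right k).eq, ← Function.iterate_mul]
    simp [p]
  have hvol : Real.exp (N * k * h) * μ.real (Metric.closedBall 0 1) =
      μ.real ((Bu ^ k) '' Metric.closedBall 0 1) := by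
    rw [measureReal_image_continuousLinearEquiv, det_coe_pow, abs_pow, hdet, ← Real.exp_nat_mul]
    ring_nf
  rw [div_mul_eq_mul_div, le_div_iff₀ hball, hvol]
  exact (measureReal_mono hsub
    ((hWc.image (p.continuous.comp (hFc.continuous.iterate _))).measure_lt_top.ne)).trans
    (hC (N * k))

end LowerBound

section IteratedPerturbation

open scoped NNReal

variable {E : Type*} [NormedAddCommGroup E] [NormedSpace ℝ E] {F : E → E} {T : E →L[ℝ] E}

lemma lipschitzWith_of_lipschitzWith_sub {η : ℝ≥0} (hη : η ≤ 1)
    (hF : LipschitzWith η fun x => F x - T x) : LipschitzWith (‖T‖₊ + 1) F := by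
  have hsum := T.lipschitz.add hF
  simp only [add_sub_cancel] at hsum
  exact hsum.weaken (by gcongr)

lemma iterate_succ_sub_pow_succ_apply (F : E → E) (T : E →L[ℝ] E) (n : ℕ) (x : E) :
    F^[n + 1] x - (T ^ (n + 1)) x = (F (F^[n] x) - T (F^[n] x)) + T (F^[n] x - (T ^ n) x) := by
  rw [Function.iterate_succ_apply', pow_succ', mul_apply_eq_comp, map_sub]
  abel

lemma lipschitzWith_iterate_sub_pow {η : ℝ≥0} (hη : η ≤ 1)
    (hF : LipschitzWith η fun x => F x - T x) (n : ℕ) :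
    LipschitzWith (n * (‖T‖₊ + 1) ^ n * η) fun x => F^[n] x - (T ^ n) x := by
  induction n with
  | zero => simp
  | succ n ih =>
    simp only [iterate_succ_sub_pow_succ_apply]
    refine ((hF.comp ((lipschitzWith_of_lipschitzWith_sub hη hF).iterate n)).add
      (T.lipschitz.comp ih)).weaken ?_
    calc η * (‖T‖₊ + 1) ^ n + ‖T‖₊ * (n * (‖T‖₊ + 1) ^ n * η)
        = (1 + ‖T‖₊ * n) * (‖T‖₊ + 1) ^ n * η := by ring
      _ ≤ ((n + 1) * (‖T‖₊ + 1)) * (‖T‖₊ + 1) ^ n * η := by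
        gcongr
        calc 1 + ‖T‖₊ * n ≤ 1 + ‖T‖₊ * n + (n + ‖T‖₊) := le_self_add
          _ = (n + 1) * (‖T‖₊ + 1) := by ring
      _ = (n + 1 : ℕ) * (‖T‖₊ + 1) ^ (n + 1) * η := by
        push_cast
        ring

lemma norm_iterate_sub_pow_le {η : ℝ} (hF : ∀ x, ‖F x - T x‖ ≤ η) (n : ℕ) (x : E) :
    ‖F^[n] x - (T ^ n) x‖ ≤ n * (‖T‖ + 1) ^ n * η := by
  have hη : 0 ≤ η := (norm_nonneg _).trans (hF 0)
  induction n with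
  | zero => simp
  | succ n ih =>
    rw [iterate_succ_sub_pow_succ_apply]
    calc ‖F (F^[n] x) - T (F^[n] x) + T (F^[n] x - (T ^ n) x)‖
        ≤ η + ‖T‖ * (n * (‖T‖ + 1) ^ n * η) :=
          norm_add_le_of_le (hF _) (T.le_opNorm_of_le ih)
      _ ≤ (‖T‖ + 1) ^ (n + 1) * η + (‖T‖ + 1) * (n * (‖T‖ + 1) ^ n * η) := by
        gcongr
        · exact le_mul_of_one_le_left hη (one_le_pow₀ (by simp))
        · exact le_add_of_nonneg_right zero_le_one
      _ = (n + 1 : ℕ) * (‖T‖ + 1) ^ (n + 1) * η := by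
        push_cast
        ring

variable {Y : Type*} [NormedAddCommGroup Y] [NormedSpace ℝ Y]

theorem exists_pos_forall_conj_iterate_sub_close (Φ : E ≃L[ℝ] Y) (T : E →L[ℝ] E) {B : Y → Y}
    {n : ℕ} (hB : Function.Semiconj Φ ⇑(T ^ n) B) :
    ∃ η : ℝ≥0, 0 < η ∧ η ≤ 1 ∧ ∀ F : E → E, (LipschitzWith η fun x => F x - T x) →
      (∀ x, ‖F x - T x‖ ≤ η) →
      (LipschitzWith 1 fun z => Φ (F^[n] (Φ.symm z)) - B z) ∧
        ∀ z, ‖Φ (F^[n] (Φ.symm z)) - B z‖ ≤ 1 := by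
  set κ : ℝ≥0 := n * (‖T‖₊ + 1) ^ n
  set P : ℝ≥0 := ‖(Φ : E →L[ℝ] Y)‖₊
  set Q : ℝ≥0 := ‖(Φ.symm : Y →L[ℝ] E)‖₊
  have hinv {c : ℝ≥0} (hc : c ≤ 1 + P * κ + P * κ * Q) : c * (1 + P * κ + P * κ * Q)⁻¹ ≤ 1 :=
    mul_inv_le_one_of_le₀ hc zero_le
  have hη1 : (1 + P * κ + P * κ * Q)⁻¹ ≤ 1 := by simpa using hinv (le_add_right le_self_add)
  refine ⟨(1 + P * κ + P * κ * Q)⁻¹, by positivity, hη1, fun F hL hsup => ?_⟩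
  have hconj z : Φ (F^[n] (Φ.symm z)) - B z = Φ (F^[n] (Φ.symm z) - (T ^ n) (Φ.symm z)) := by
    rw [map_sub, hB.eq, Φ.apply_symm_apply]
  simp only [hconj]
  constructor
  · refine (Φ.lipschitz.comp ((lipschitzWith_iterate_sub_pow hη1 hL n).comp
      Φ.symm.lipschitz)).weaken ?_
    calc P * (κ * (1 + P * κ + P * κ * Q)⁻¹ * Q)
        = P * κ * Q * (1 + P * κ + P * κ * Q)⁻¹ := by ring
      _ ≤ 1 := hinv le_add_self
  · intro z
    calc ‖Φ (F^[n] (Φ.symm z) - (T ^ n) (Φ.symm z))‖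
        ≤ P * (κ * (1 + P * κ + P * κ * Q)⁻¹ : ℝ≥0) :=
          (Φ : E →L[ℝ] Y).le_opNorm_of_le (by
            simpa [κ] using norm_iterate_sub_pow_le hsup n (Φ.symm z))
      _ ≤ 1 := by
        rw [← NNReal.coe_mul, ← mul_assoc]
        exact_mod_cast hinv (le_add_right le_add_self)

end IteratedPerturbation

section EntropyOfPerturbations

open Module (finrank)
open scoped NNReal

variable {U V : Type*} [NormedAddCommGroup U] [NormedSpace ℝ U] [NormedAddCommGroup V]
  [NormedSpace ℝ V]

lemma coe_symm_pow (B : U ≃L[ℝ] U) (n : ℕ) :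
    ((B ^ n).symm : U →L[ℝ] U) = (B.symm : U →L[ℝ] U) ^ n := by
  induction n with
  | zero => rfl
  | succ n ih =>
    rw [pow_succ, pow_succ', ← ih]
    rfl

lemma semiconj_pow_prodMap {E : Type*} [NormedAddCommGroup E] [NormedSpace ℝ E] {Φ : E → U × V}
    {T : E →L[ℝ] E} {Bu : U ≃L[ℝ] U} {Bc : V →L[ℝ] V}
    (h : Function.Semiconj Φ T (Prod.map Bu Bc)) (n : ℕ) :
    Function.Semiconj Φ ⇑(T ^ n) (Prod.map ⇑(Bu ^ n) ⇑(Bc ^ n)) := by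
  rw [hom_coe_pow (fun B : U ≃L[ℝ] U => ⇑B) rfl (fun _ _ => rfl), FunLike.coe_pow_eq_iterate T,
    FunLike.coe_pow_eq_iterate Bc, ← Prod.map_iterate]
  exact h.iterate_right n

lemma exists_pow_dominated {Bu : U ≃L[ℝ] U} {Bc : V →L[ℝ] V}
    {s : ℝ} (hs0 : 0 < s) (hs1 : s < 1)
    (hBu : (fun n => ‖(Bu.symm : U →L[ℝ] U) ^ n‖) =O[atTop] fun n => s ^ n)
    (hBc : ∀ t : ℝ, 1 < t → (fun n => ‖Bc ^ n‖) =O[atTop] fun n => t ^ n)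
    (p q : ℕ) {ε : ℝ} (hε : 0 < ε) :
    ∃ N : ℕ, 0 < N ∧ ‖((Bu ^ N).symm : U →L[ℝ] U)‖ * (2 + ‖Bc ^ N‖) ≤ 1 ∧
      4 ^ p * (2 * (‖Bc ^ N‖ + 2)) ^ q ≤ Real.exp (N * ε) := by
  have hcontr := (tendsto_mul_const_add_zero hs0 hs1 hBu hBc 2).eventually_le_const zero_lt_one
  have hgrowth := (isLittleO_const_mul_pow_const_add_exp hBc (4 ^ p * 2 ^ q) 2 q hε).def one_pos
  obtain ⟨N, hN, hNc, hNg⟩ := ((eventually_gt_atTop 0).and (hcontr.and hgrowth)).exists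
  refine ⟨N, hN, by rwa [coe_symm_pow], ?_⟩
  rw [one_mul, Real.norm_of_nonneg (Real.exp_pos _).le] at hNg
  refine Eq.trans_le ?_ ((Real.le_norm_self _).trans hNg)
  rw [mul_pow, add_comm]
  ring

variable {d : ℕ} [FiniteDimensional ℝ U] [FiniteDimensional ℝ V]

theorem topEnt_mem_Icc_of_semiconj {F : (Fin d → ℝ) → Fin d → ℝ} (hF : IsTorusLift F)
    (hFc : UniformContinuous F) (Φ : (Fin d → ℝ) ≃L[ℝ] U × V) {G : U × V → U × V} {N : ℕ}
    (hN : 0 < N) (hΦ : Function.Semiconj Φ F^[N] G) {Bu : U ≃L[ℝ] U} {Bc : V →L[ℝ] V}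
    (hG : LipschitzWith 1 fun z => G z - Prod.map Bu Bc z)
    (hG' : ∀ z, ‖G z - Prod.map Bu Bc z‖ ≤ 1)
    (hB : ‖(Bu.symm : U →L[ℝ] U)‖ * (2 + ‖Bc‖) ≤ 1) {h ε : ℝ}
    (hdet : |LinearMap.det (Bu : U →ₗ[ℝ] U)| = Real.exp (N * h))
    (hε : 4 ^ finrank ℝ U * (2 * (‖Bc‖ + 2)) ^ finrank ℝ V ≤ Real.exp (N * ε)) :
    topEnt distQ F ∈ Set.Icc h (h + ε) := by
  have hBu : ‖(Bu.symm : U →L[ℝ] U)‖ ≤ 1 / 2 := by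
    nlinarith [norm_nonneg (Bu.symm : U →L[ℝ] U), norm_nonneg Bc]
  obtain ⟨K, hK, hcov⟩ := exists_ball_image_cover hG hBu
  have hKexp : K ≤ Real.exp (N * (h + ε)) := by
    rw [mul_add, Real.exp_add, ← hdet]
    exact hK.trans (by rw [mul_assoc]; gcongr)
  have hgrowth := sepGrowthLE_of_semiconj hF hFc Φ hN hΦ hcov hKexp
  exact ⟨le_topEnt_of_semiconj hF hFc hgrowth Φ hN hΦ
    (fun k w hw => exists_iterate_fst_eq hG hG' hB k hw) hdet, hgrowth.topEnt_le⟩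

theorem exists_forall_topEnt_mem_Icc (T : (Fin d → ℝ) →L[ℝ] Fin d → ℝ) :
    ∃ h : ℝ, ∀ ε : ℝ, 0 < ε → ∃ η : ℝ≥0, 0 < η ∧ ∀ F : (Fin d → ℝ) → Fin d → ℝ, IsTorusLift F →
      (∀ x, ‖F x - T x‖ ≤ η) → (LipschitzWith η fun x => F x - T x) →
      topEnt distQ F ∈ Set.Icc h (h + ε) := by
  obtain ⟨U, V, Φ, Au, Ac, hΦ, ⟨s, hs0, hs1, hAu⟩, hAc⟩ :=
    exists_unstable_splitting (T : Module.End ℝ (Fin d → ℝ))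
  set D : ℝ := |LinearMap.det (Au : U →ₗ[ℝ] U)|
  have hD : 0 < D := abs_pos.2 (LinearEquiv.isUnit_det' Au.toLinearEquiv).ne_zero
  refine ⟨Real.log D, fun ε hε => ?_⟩
  obtain ⟨N, hN, hdom, hNε⟩ := exists_pow_dominated hs0 hs1 hAu hAc (finrank ℝ U) (finrank ℝ V) hε
  have hdet : |LinearMap.det ((Au ^ N : U ≃L[ℝ] U) : U →ₗ[ℝ] U)| = Real.exp (N * Real.log D) := by
    rw [det_coe_pow, abs_pow, Real.exp_nat_mul, Real.exp_log hD]
  obtain ⟨η, hη, hη1, hclose⟩ :=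
    exists_pos_forall_conj_iterate_sub_close Φ T (semiconj_pow_prodMap hΦ N)
  refine ⟨η, hη, fun F hF hsup hL => ?_⟩
  obtain ⟨hG, hG'⟩ := hclose F hL hsup
  exact topEnt_mem_Icc_of_semiconj hF (lipschitzWith_of_lipschitzWith_sub hη1 hL).uniformContinuous
    Φ hN (fun x => by rw [Φ.symm_apply_apply]) hG hG' hdom hdet hNε

lemma isTorusLift_mulVec_add (A : Matrix (Fin d) (Fin d) ℤ) {g : (Fin d → ℝ) → Fin d → ℝ}
    (hg : ∀ v m, g (v + latVec m) = g v) : IsTorusLift fun v => (matR A).mulVec v + g v := by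
  have hA (m : Fin d → ℤ) : (matR A).mulVec (latVec m) = latVec (A.mulVec m) := by
    ext i
    simp [latVec, matR, Matrix.mulVec, dotProduct]
  intro v m
  refine ⟨A.mulVec m, ?_⟩
  simp only [hg, Matrix.mulVec_add, hA]
  abel

end EntropyOfPerturbations

theorem statement6_general {d : ℕ} (A : Matrix (Fin d) (Fin d) ℤ) {ε : ℝ} (hε : 0 < ε) :
    ∃ η : NNReal, 0 < η ∧ ∀ g : (Fin d → ℝ) → Fin d → ℝ,
      (∀ v m, g (v + latVec m) = g v) → (∀ v, ‖g v‖ ≤ η) → LipschitzWith η g →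
      |topEnt distQ (fun v => (matR A).mulVec v + g v) -
        topEnt distQ (fun v => (matR A).mulVec v)| ≤ ε := by
  obtain ⟨h, hh⟩ := exists_forall_topEnt_mem_Icc (matR A).mulVecLin.toContinuousLinearMap
  obtain ⟨η, hη, H⟩ := hh ε hε
  have hIcc (g : (Fin d → ℝ) → Fin d → ℝ) (hper : ∀ v m, g (v + latVec m) = g v)
      (hsup : ∀ v, ‖g v‖ ≤ η) (hL : LipschitzWith η g) :
      topEnt distQ (fun v => (matR A).mulVec v + g v) ∈ Set.Icc h (h + ε) :=
    H _ (isTorusLift_mulVec_add A hper) (by simpa using hsup) (by simpa using hL)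
  refine ⟨η, hη, fun g hper hsup hL => ?_⟩
  have h0 := hIcc 0 (fun _ _ => rfl) (by simp) ((LipschitzWith.const 0).weaken zero_le)
  simp only [Pi.zero_apply, add_zero] at h0
  simpa [Real.dist_eq] using Real.dist_le_of_mem_Icc (hIcc g hper hsup hL) h0

/-- continuity of topological entropy at ergodic toral automorphisms
in the `C¹` topology. Let `A ∈ GL(d,ℤ)` be ergodic. For every `ε > 0` there is
`η > 0` such that for every `C¹`, `ℤ^d`-periodic `g : ℝ^d → ℝ^d` of `C¹`-size `< η`
for which `F = A + g` is a `C¹` diffeomorphism of `ℝ^d`, the induced torus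
homeomorphism `f` (computed on the lift `F`, with the quotient pseudometric `distQ`)
satisfies `|h_top(f) − h_top(T_A)| ≤ ε`. -/
theorem statement6 {d : ℕ} (hd : 2 ≤ d) (A : Matrix (Fin d) (Fin d) ℤ)
    (hdet : A.det = 1 ∨ A.det = -1) (herg : IsErgodicMatrix A) :
    ∀ ε : ℝ, 0 < ε → ∃ η : ℝ, 0 < η ∧
      ∀ g : (Fin d → ℝ) → (Fin d → ℝ),
        ContDiff ℝ 1 g →
        (∀ (v : Fin d → ℝ) (m : Fin d → ℤ), g (v + latVec m) = g v) →
        (∀ v : Fin d → ℝ, ‖g v‖ + ‖fderiv ℝ g v‖ < η) →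
        Function.Bijective (fun v => (matR A).mulVec v + g v) →
        ContDiff ℝ 1 (Function.invFun (fun v => (matR A).mulVec v + g v)) →
        |topEnt distQ (fun v => (matR A).mulVec v + g v) -
          topEnt distQ (fun v => (matR A).mulVec v)| ≤ ε := by
  intro ε hε
  obtain ⟨η, hη, H⟩ := statement6_general A hε
  refine ⟨η, hη, fun g hg hper hsize _ _ => H g hper (fun v => ?_) ?_⟩
  · linarith [hsize v, norm_nonneg (fderiv ℝ g v)]
  · refine lipschitzWith_of_nnnorm_fderiv_le (hg.differentiable one_ne_zero) fun v => ?_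
    exact NNReal.coe_le_coe.1 (by rw [coe_nnnorm]; linarith [hsize v, norm_nonneg (g v)])

end Paper
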